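/- For all integers C ≥ 1 and D ≥ 1, f(C,D) = C·f(C−1,D) + D·f(C,D−1), where f(C,D) = [s_{(2^C,1^D)}] X_{GN_{C+D,C}} for C, D ≥ 0 and (2^a,1^b) denotes the partition with a parts equal to 2 followed by b parts equal to 1. -/

import Mathlib

open scoped Classical

/-! ### Cells and Young diagrams -/

/-- A cell of a Young diagram: `(row, column)`, both 0-indexed, rows from the top. -/
abbrev Cell : Type := ℕ × ℕ

/-- The length of row `i` (0-indexed from the top) of the Young diagram of the
partition `lam`, whose parts are arranged in weakly decreasing order. -/
def rowLen {N : ℕ} (lam : Nat.Partition N) (i : ℕ) : ℕ :=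
  ((lam.parts.sort (· ≤ ·)).reverse).getD i 0

/-- The Young diagram of a partition, as a set of cells. -/
def diag {N : ℕ} (lam : Nat.Partition N) : Set Cell :=
  {c : Cell | c.2 < rowLen lam c.1}

/-- The number of rows (the length) of a partition. -/
def numRows {N : ℕ} (lam : Nat.Partition N) : ℕ := Multiset.card lam.parts

/-! ### Chromatic symmetric functions and Schur functions, as monomial-coefficient
functions.  A formal power series of bounded degree in the commuting variables
`x_0, x_1, x_2, …` is recorded by the map sending an exponent vector `μ : ℕ → ℕ`
(only finitely many nonzero entries ever matter) to the coefficient of the monomial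
`∏ i, x_i ^ μ i`.  Colors / tableau entries are positive integers, so the variable
`x_0` is never used. -/

/-- A proper coloring of `G` by positive integers. -/
def IsProperColoring {V : Type*} (G : SimpleGraph V) (f : V → ℕ) : Prop :=
  (∀ v, 0 < f v) ∧ ∀ u v, G.Adj u v → f u ≠ f v

/-- The coefficient of the monomial `∏ i, x_i ^ μ i` in the chromatic symmetric
function `X_G = ∑_{proper colorings f} ∏_{v} x_{f v}`. -/
noncomputable def XCoeff {V : Type*} [Fintype V] (G : SimpleGraph V) (μ : ℕ → ℕ) : ℚ :=
  Nat.card {f : V → ℕ //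
    IsProperColoring G f ∧ ∀ i, Nat.card {v : V // f v = i} = μ i}

/-- A semistandard Young tableau of shape `lam`: positive entries on the diagram
(normalized to `0` off the diagram), weakly increasing along rows, strictly
increasing down columns. -/
def IsSSYT {N : ℕ} (lam : Nat.Partition N) (t : Cell → ℕ) : Prop :=
  (∀ c, c ∉ diag lam → t c = 0) ∧ (∀ c ∈ diag lam, 0 < t c) ∧
  (∀ i j : ℕ, ((i, j + 1) : Cell) ∈ diag lam → t (i, j) ≤ t (i, j + 1)) ∧
  (∀ i j : ℕ, ((i + 1, j) : Cell) ∈ diag lam → t (i, j) < t (i + 1, j))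

/-- The coefficient of the monomial `∏ i, x_i ^ μ i` in the Schur function `s_lam`,
i.e. the number of SSYT of shape `lam` and weight `μ`. -/
noncomputable def schurFn {N : ℕ} (lam : Nat.Partition N) (μ : ℕ → ℕ) : ℚ :=
  Nat.card {t : Cell → ℕ // IsSSYT lam t ∧
    ∀ i, Nat.card {c : Cell // c ∈ diag lam ∧ t c = i} = μ i}

/-- The coefficient `[s_lam] f` of the Schur function `s_lam` in the (unique, when it
exists) expansion `f = ∑_{ν ⊢ N} c_ν s_ν` of a symmetric function `f`, homogeneous of
degree `N`, given by its monomial coefficients. -/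
noncomputable def sCoeff {N : ℕ} (f : (ℕ → ℕ) → ℚ) (lam : Nat.Partition N) : ℚ :=
  if h : ∃ c : Nat.Partition N →₀ ℚ, ∀ μ, f μ = c.sum fun ν a => a * schurFn ν μ
  then h.choose lam else 0

/-! ### Graphs: generalized nets, generalized spiders, disjoint unions -/

/-- The generalized net `GN_{n,m}`: the complete graph on the body `Fin n`, with a
pendant (`Sum.inr j`) attached to the anchor `Sum.inl j` for each `j : Fin m`. -/
def genNet (n m : ℕ) : SimpleGraph (Fin n ⊕ Fin m) :=
  SimpleGraph.fromRel fun a b =>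
    match a, b with
    | Sum.inl _, Sum.inl _ => True
    | Sum.inl i, Sum.inr j => (i : ℕ) = (j : ℕ)
    | Sum.inr _, _ => False

/-- The generalized spider `GS_{n,(2,1^{m-1})}`: the complete graph on the body
`Fin n`, a pendant `Sum.inr (Sum.inl j)` attached to the body vertex `Sum.inl j` for
each `j : Fin m`, and one extra vertex `Sum.inr (Sum.inr 0)` (the special pendant)
attached to the pendant `Sum.inr (Sum.inl 0)`, so that the body vertex `0` (the
special anchor) carries an attached path on two vertices. -/
def genSpider2 (n m : ℕ) : SimpleGraph (Fin n ⊕ (Fin m ⊕ Fin 1)) :=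
  SimpleGraph.fromRel fun a b =>
    match a, b with
    | Sum.inl _, Sum.inl _ => True
    | Sum.inl i, Sum.inr (Sum.inl j) => (i : ℕ) = (j : ℕ)
    | Sum.inr (Sum.inl j), Sum.inr (Sum.inr _) => (j : ℕ) = 0
    | _, _ => False

/-- Disjoint union of two simple graphs. -/
def disjUnion {α β : Type*} (G : SimpleGraph α) (H : SimpleGraph β) :
    SimpleGraph (α ⊕ β) :=
  SimpleGraph.fromRel fun a b =>
    match a, b with
    | Sum.inl a, Sum.inl b => G.Adj a b
    | Sum.inr a, Sum.inr b => H.Adj a b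
    | _, _ => False

/-- The one-vertex graph `K_1`. -/
def K1 : SimpleGraph (Fin 1) := ⊥

/-- The path (= complete graph) on two vertices `P_2`. -/
def P2 : SimpleGraph (Fin 2) := ⊤

/-! ### Operations on partitions -/

/-- `removeOnes lam t` is the partition `lam ∖ 1^t` obtained by deleting `t` parts
equal to `1` from `lam` (junk value if `lam` has fewer than `t` parts equal to `1`). -/
def removeOnes {N : ℕ} (lam : Nat.Partition N) (t : ℕ) : Nat.Partition (N - t) :=
  if h : Multiset.replicate t 1 ≤ lam.parts then
    { parts := lam.parts - Multiset.replicate t 1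
      parts_pos := fun hx =>
        lam.parts_pos (Multiset.mem_of_le (tsub_le_self) hx)
      parts_sum := by
        have h1 : (lam.parts - Multiset.replicate t 1) + Multiset.replicate t 1
            = lam.parts := tsub_add_cancel_of_le h
        have h2 := congrArg Multiset.sum h1
        rw [Multiset.sum_add, Multiset.sum_replicate, lam.parts_sum] at h2
        simp only [smul_eq_mul, mul_one] at h2
        omega }
  else Nat.Partition.indiscrete (N - t)

/-- The partition `(2^a, 1^b)` of `2*a + b`. -/
def twoOne (a b : ℕ) : Nat.Partition (2 * a + b) where
  parts := Multiset.replicate a 2 + Multiset.replicate b 1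
  parts_pos := by
    intro i hi
    rw [Multiset.mem_add] at hi
    rcases hi with hi | hi <;> · rw [Multiset.eq_of_mem_replicate hi]; omega
  parts_sum := by
    rw [Multiset.sum_add, Multiset.sum_replicate, Multiset.sum_replicate]
    simp only [smul_eq_mul, mul_one]
    omega

/-! ### Special rim hook `G`-tabloids -/

/-- Two cells are adjacent if they share an edge. -/
def cellAdj (c d : Cell) : Prop :=
  (c.1 = d.1 ∧ (c.2 + 1 = d.2 ∨ d.2 + 1 = c.2)) ∨
  (c.2 = d.2 ∧ (c.1 + 1 = d.1 ∨ d.1 + 1 = c.1))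

/-- A set of cells is (the diagram of) a Young diagram if it is closed under
decreasing either coordinate. -/
def IsYoungDiag (D : Set Cell) : Prop :=
  ∀ i j i' j' : ℕ, ((i, j) : Cell) ∈ D → i' ≤ i → j' ≤ j → ((i', j') : Cell) ∈ D

/-- A set of cells is connected (via edge-adjacency, within the set). -/
def CellConnected (S : Set Cell) : Prop :=
  ∀ c ∈ S, ∀ d ∈ S, Relation.ReflTransGen (fun a b => a ∈ S ∧ b ∈ S ∧ cellAdj a b) c d

/-- A border strip (= rim hook, as a set of cells): nonempty, connected, and
containing no 2×2 square of cells. -/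
def IsBorderStrip (H : Set Cell) : Prop :=
  H.Nonempty ∧ CellConnected H ∧
    ∀ i j : ℕ, ¬(((i, j) : Cell) ∈ H ∧ ((i + 1, j) : Cell) ∈ H ∧
      ((i, j + 1) : Cell) ∈ H ∧ ((i + 1, j + 1) : Cell) ∈ H)

/-- `H` is a rim hook of the Young diagram `D`: a border strip contained in `D`
whose removal leaves a Young diagram. -/
def IsRimHookOf (D H : Set Cell) : Prop :=
  H ⊆ D ∧ IsBorderStrip H ∧ IsYoungDiag (D \ H)

/-- `IsRemovalSeq L D` says that the sets of cells in the list `L` may be removed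
successively from the diagram `D`, each being a rim hook of what remains, with
nothing left at the end. -/
def IsRemovalSeq : List (Set Cell) → Set Cell → Prop
  | [], D => D = ∅
  | H :: L, D => IsRimHookOf D H ∧ IsRemovalSeq L (D \ H)

/-- A special rim hook `G`-tabloid of shape `lam`, with respect to an order `r` on
the vertices of `G`: the cells of the diagram of `lam` are filled bijectively with
the vertices of `G` (vertex `v` goes in cell `pos v`), and the diagram is tiled by
rim hooks, successively removable, each meeting the first column.  The rim hooks are
recorded by the labelling `hk`, which assigns to each vertex the topmost row in which
its rim hook meets the first column.  The vertices in each rim hook form a stable set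
of `G` and, read from the rim hook's (bottom) cell in the first column — i.e. in
increasing order of the diagonal index `column − row` — they increase with respect
to `r`. -/
structure SRHGTabloid {V : Type*} (G : SimpleGraph V) (r : V → V → Prop)
    {N : ℕ} (lam : Nat.Partition N) where
  /-- the cell occupied by each vertex -/
  pos : V → Cell
  /-- the label of the rim hook containing each vertex: the topmost row in which
  that rim hook meets the first column -/
  hk : V → ℕ
  pos_inj : Function.Injective pos
  pos_range : Set.range pos = diag lam
  hk_mem : ∀ v, ((hk v, 0) : Cell) ∈ pos '' {u | hk u = hk v}
  hk_min : ∀ v i, ((i, 0) : Cell) ∈ pos '' {u | hk u = hk v} → hk v ≤ i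
  removal : ∃ L : List ℕ, L.Nodup ∧ (∀ i, i ∈ L ↔ ∃ v, hk v = i) ∧
    IsRemovalSeq (L.map fun i => pos '' {u | hk u = i}) (diag lam)
  stable : ∀ u v, hk u = hk v → u ≠ v → ¬G.Adj u v
  increasing : ∀ u v, hk u = hk v →
    ((pos u).2 : ℤ) - ((pos u).1 : ℤ) < ((pos v).2 : ℤ) - ((pos v).1 : ℤ) → r u v

/-- The sign of a special rim hook `G`-tabloid: `(-1)` to the total number of north
steps, where a rim hook spanning `k` rows contributes `k - 1` north steps. -/
noncomputable def tabSign {V : Type*} {G : SimpleGraph V} {r : V → V → Prop}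
    {N : ℕ} {lam : Nat.Partition N} (T : SRHGTabloid G r lam) : ℤ :=
  (-1) ^ ∑ i ∈ Finset.range N,
    ({a : ℕ | ∃ v, T.hk v = i ∧ (T.pos v).1 = a}.ncard - 1)

/-- The cells of the head of a tabloid of shape `lam`: the rows of length `≥ 2`. -/
def headCells {N : ℕ} (lam : Nat.Partition N) : Set Cell :=
  {c : Cell | c ∈ diag lam ∧ 2 ≤ rowLen lam c.1}

/-- The cells of the tail of a tabloid of shape `lam`: the rows of length `1`. -/
def tailCells {N : ℕ} (lam : Nat.Partition N) : Set Cell :=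
  {c : Cell | c ∈ diag lam ∧ rowLen lam c.1 = 1}

/-- Two special rim hook `G`-tabloids have the same head: the same cells of the head
are occupied by the same vertices, and the rim hook structure restricted to the head
agrees. -/
def SameHead {V : Type*} {G : SimpleGraph V} {r : V → V → Prop} {N : ℕ}
    {lam : Nat.Partition N} (T T' : SRHGTabloid G r lam) : Prop :=
  (∀ v, T.pos v ∈ headCells lam ↔ T'.pos v ∈ headCells lam) ∧
  (∀ v, T.pos v ∈ headCells lam → T.pos v = T'.pos v) ∧
  (∀ u v, T.pos u ∈ headCells lam → T.pos v ∈ headCells lam →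
    (T.hk u = T.hk v ↔ T'.hk u = T'.hk v))

/-- `f(C,D) = [s_{(2^C,1^D)}] X_{GN_{C+D,C}}`. -/
noncomputable def fCD (C D : ℕ) : ℚ :=
  sCoeff (XCoeff (genNet (C + D) C)) (twoOne C D)

/-! ### Generic transfer-operator counting -/

noncomputable def KG {σ : Type*} [PartialOrder σ] [LocallyFiniteOrderBot σ]
    (size : σ → ℕ) (h : σ → σ → ℚ) : List ℕ → σ → ℚ
  | [], s => if size s = 0 then 1 else 0
  | a :: w, s => ∑ s' ∈ Finset.Iic s, if size s = size s' + a then h s s' * KG size h w s' else 0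

/-- signed sum over compositions -/
noncomputable def EE (F : List ℕ → ℚ) : ℕ → List ℕ → ℚ
  | 0, w => F w
  | k + 1, w => ∑ i : Fin (k + 1), (-1) ^ (i : ℕ) * EE F (k - i) ((i + 1) :: w)
termination_by k => k
decreasing_by omega

theorem EE_sum {ι : Type*} (s : Finset ι) (c : ι → ℚ) (F : ι → List ℕ → ℚ) (k : ℕ) :
    ∀ w, EE (fun w => ∑ i ∈ s, c i * F i w) k w = ∑ i ∈ s, c i * EE (F i) k w := by
  induction k using Nat.strong_induction_on with
  | _ k ih =>
    intro w
    cases k with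
    | zero => simp [EE]
    | succ k =>
      simp only [EE, Finset.mul_sum]
      rw [Finset.sum_comm]
      refine Finset.sum_congr rfl fun i _ => ?_
      rw [ih (k - i) (by omega), Finset.mul_sum]
      refine Finset.sum_congr rfl fun j _ => ?_
      ring

section Gen
variable {σ : Type*} [PartialOrder σ] [LocallyFiniteOrderBot σ]
  (size : σ → ℕ) (h v : σ → σ → ℚ) (good : σ → Prop)

theorem EE_KG (hs : StrictMono size)
    (hv1 : ∀ s, good s → v s s = 1)
    (hv : ∀ s ρ, good s → ρ < s →
      v s ρ = ∑ κ ∈ Finset.Iic s, if ρ < κ then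
        (-1) ^ (size κ + size ρ + 1) * v s κ * h κ ρ else 0) (k : ℕ) :
    ∀ s, good s → ∀ w, EE (fun w => KG size h w s) k w =
      ∑ ρ ∈ Finset.Iic s, if size s = size ρ + k then v s ρ * KG size h w ρ else 0 := by
  induction k using Nat.strong_induction_on with
  | _ k ih =>
    intro s gs w
    cases k with
    | zero =>
      simp only [EE]
      rw [Finset.sum_eq_single_of_mem s (by simp)]
      · simp [hv1 s gs]
      · intro b hb hbs
        have := hs (lt_of_le_of_ne (Finset.mem_Iic.1 hb) hbs)
        rw [if_neg (by omega)]
    | succ k =>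
      simp only [EE]
      have e1 : ∀ i : Fin (k+1), (-1 : ℚ) ^ (i : ℕ) * EE (fun w => KG size h w s) (k - i) ((i + 1) :: w)
        = ∑ ρ ∈ Finset.Iic s, ∑ κ ∈ Finset.Iic s, 
           if ρ ≤ κ ∧ size s = size κ + (k - i) ∧ size κ = size ρ + (i + 1) then
             (-1) ^ (i : ℕ) * v s κ * h κ ρ * KG size h w ρ else 0 := by
        intro i
        rw [ih (k - i) (by omega) s gs, Finset.mul_sum, Finset.sum_comm]
        refine Finset.sum_congr rfl fun κ hκ => ?_
        rw [Finset.mem_Iic] at hκ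
        split_ifs with h1
        · simp only [KG, Finset.mul_sum]
          rw [← Finset.sum_subset (Finset.Iic_subset_Iic.2 hκ)]
          · refine Finset.sum_congr rfl fun ρ hρ => ?_
            rw [Finset.mem_Iic] at hρ
            simp only [hρ, h1, true_and]
            split_ifs <;> ring
          · intro ρ _ h2
            rw [Finset.mem_Iic] at h2
            simp [h2]
        · simp [h1]
      simp only [e1]
      rw [Finset.sum_comm]
      refine Finset.sum_congr rfl fun ρ hρ => ?_
      rw [Finset.sum_comm]
      rw [Finset.mem_Iic] at hρ
      split_ifs with h1
      · have hlt : ρ < s := lt_of_le_of_ne hρ (by rintro rfl; omega)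
        rw [hv s ρ gs hlt, Finset.sum_mul]
        refine Finset.sum_congr rfl fun κ hκ => ?_
        rw [Finset.mem_Iic] at hκ
        have hm := hs.monotone hκ
        split_ifs with h2
        · have h3 := hs h2
          rw [Finset.sum_eq_single (⟨size κ - size ρ - 1, by omega⟩ : Fin (k+1))]
          · rw [if_pos ⟨h2.le, by simp only; omega, by simp only; omega⟩]
            congr 3
            simp only
            have : size κ + size ρ + 1 = (size κ - size ρ - 1) + 2 * (size ρ + 1) := by omega
            rw [this, pow_add, pow_mul]; simp
          · intro i _ hi
            rw [if_neg]
            rintro ⟨_, _, h4⟩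
            apply hi; ext; simp only; omega
          · simp
        · rw [zero_mul]
          refine Finset.sum_eq_zero fun i _ => ?_
          rw [if_neg]
          rintro ⟨h4, _, h5⟩
          exact h2 (lt_of_le_of_ne h4 (by rintro rfl; omega))
      · refine Finset.sum_eq_zero fun κ _ => Finset.sum_eq_zero fun i _ => ?_
        rw [if_neg]
        rintro ⟨_, h4, h5⟩
        have := i.2
        omega

theorem KG_sum : ∀ (w : List ℕ) (s : σ), KG size h w s ≠ 0 → w.sum = size s
  | [], s, hh => by
      simp only [KG] at hh
      simp; by_contra h2; simp [Ne.symm h2] at hh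
  | a :: w, s, hh => by
      simp only [KG] at hh
      obtain ⟨ρ, _, h2⟩ := Finset.exists_ne_zero_of_sum_ne_zero hh
      split_ifs at h2 with h3
      · have := KG_sum w ρ (by intro h4; simp [h4] at h2)
        simp; omega
      · exact absurd rfl h2

theorem KG_zero (hs : StrictMono size) (h1 : ∀ s, good s → h s s = 1) (w : List ℕ) (s : σ)
    (gs : good s) : KG size h (0 :: w) s = KG size h w s := by
  simp only [KG]
  rw [Finset.sum_eq_single_of_mem s (by simp)]
  · simp [h1 s gs]
  · intro b hb hbs
    have := hs (lt_of_le_of_ne (Finset.mem_Iic.1 hb) hbs)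
    rw [if_neg (by omega)]

theorem KG_replicate (hs : StrictMono size) (h1 : ∀ s, good s → h s s = 1) (w : List ℕ) (s : σ)
    (gs : good s) (z : ℕ) : KG size h (List.replicate z 0 ++ w) s = KG size h w s := by
  induction z with
  | zero => simp
  | succ z ih => rw [List.replicate_succ, List.cons_append, KG_zero size h good hs h1 _ _ gs, ih]

theorem KG_swap_aux (a b : ℕ) (w : List ℕ) (s : σ) : KG size h (a :: b :: w) s =
    ∑ ρ ∈ Finset.Iic s, (∑ κ ∈ Finset.Iic s, 
      if ρ ≤ κ ∧ size s = size κ + a ∧ size κ = size ρ + b then h s κ * h κ ρ else 0) *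
       KG size h w ρ := by
  simp only [KG, Finset.sum_mul]
  rw [Finset.sum_comm]
  refine Finset.sum_congr rfl fun κ hκ => ?_
  rw [Finset.mem_Iic] at hκ
  split_ifs with h1
  · rw [Finset.mul_sum, ← Finset.sum_subset (Finset.Iic_subset_Iic.2 hκ)]
    · refine Finset.sum_congr rfl fun ρ hρ => ?_
      rw [Finset.mem_Iic] at hρ
      simp only [hρ, h1, true_and]
      split_ifs <;> ring
    · intro ρ _ h2
      rw [Finset.mem_Iic] at h2
      simp [h2]
  · simp [h1]

theorem KG_perm (hsw : ∀ s ρ a b, ρ ≤ s →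
      (∑ κ ∈ Finset.Iic s, 
      if ρ ≤ κ ∧ size s = size κ + a ∧ size κ = size ρ + b then h s κ * h κ ρ else 0) =
      (∑ κ ∈ Finset.Iic s, 
      if ρ ≤ κ ∧ size s = size κ + b ∧ size κ = size ρ + a then h s κ * h κ ρ else 0))
    {w w' : List ℕ} (hp : w.Perm w') : ∀ s, KG size h w s = KG size h w' s := by
  induction hp with
  | nil => intro s; rfl
  | cons a _ ih => intro s; simp only [KG, ih]
  | swap a b w =>
    intro s
    rw [KG_swap_aux, KG_swap_aux]
    refine Finset.sum_congr rfl fun ρ hρ => ?_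
    rw [hsw s ρ _ _ (Finset.mem_Iic.1 hρ)]
  | trans _ _ ih1 ih2 => intro s; rw [ih1, ih2]

end Gen

/-! ### weights and fillings -/

def wt : List ℕ → ℕ → ℕ
  | [], _ => 0
  | a :: w, i => if i = w.length + 1 then a else wt w i

theorem wt_zero : ∀ w, wt w 0 = 0
  | [] => rfl
  | a :: w => by simp [wt, wt_zero w]

theorem wt_big : ∀ w i, w.length < i → wt w i = 0
  | [], _, _ => rfl
  | a :: w, i, hi => by
    simp only [List.length_cons] at hi
    rw [wt, if_neg (by omega), wt_big w i (by omega)]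

theorem exists_wt (m : ℕ) : ∀ μ : ℕ → ℕ, μ 0 = 0 → (∀ i, m < i → μ i = 0) →
    ∃ w : List ℕ, w.length = m ∧ μ = wt w := by
  induction m with
  | zero =>
    intro μ h0 hb
    refine ⟨[], rfl, ?_⟩
    funext i
    rcases Nat.eq_zero_or_pos i with rfl | hi
    · simpa [wt] using h0
    · simpa [wt] using hb i hi
  | succ m ih =>
    intro μ h0 hb
    obtain ⟨w, hw, hμ⟩ := ih (fun i => if i = m + 1 then 0 else μ i) (by simp [h0]) (by
      intro i hi
      split_ifs with h1
      · rfl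
      · exact hb i (by omega))
    refine ⟨μ (m+1) :: w, by simp [hw], ?_⟩
    funext i
    have := congrFun hμ i
    simp only [wt, hw] at this ⊢
    split_ifs with h1
    · rw [h1]
    · rw [if_neg h1] at this; exact this

section Fill
variable {X : Type*}

noncomputable def lev (U : Finset X) (t : X → ℕ) (k : ℕ) : Finset X := U.filter (fun x => t x ≤ k)

def Fill (R : Finset X → Finset X → Prop) (U : Finset X) (w : List ℕ) : Set (X → ℕ) :=
  {t | (∀ x, 0 < t x ↔ x ∈ U) ∧ (∀ i, 0 < i → (U.filter (fun x => t x = i)).card = wt w i) ∧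
    ∀ k < w.length, R (lev U t k) (lev U t (k + 1))}

theorem Fill_le {R : Finset X → Finset X → Prop} {U : Finset X} {w : List ℕ} {t : X → ℕ}
    (ht : t ∈ Fill R U w) (x : X) : t x ≤ w.length := by
  by_contra hx
  push Not at hx
  have h1 := ht.2.1 (t x) (by omega)
  rw [wt_big _ _ hx, Finset.card_eq_zero] at h1
  have : x ∈ U.filter (fun y => t y = t x) := by
    simp [← ht.1 x]; omega
  rw [h1] at this
  simp at this

theorem Fill_finite (R : Finset X → Finset X → Prop) (U : Finset X) (w : List ℕ) :
    (Fill R U w).Finite := by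
  have : Function.Injective (fun (t : Fill R U w) (x : U) =>
      (⟨t.1 x, Nat.lt_succ_of_le (Fill_le t.2 x)⟩ : Fin (w.length + 1))) := by
    intro t t' hh
    ext x
    by_cases hx : x ∈ U
    · have := congrFun hh ⟨x, hx⟩
      simpa using this
    · have h1 := (t.2.1 x).not.2 hx
      have h2 := (t'.2.1 x).not.2 hx
      omega
  exact Set.finite_coe_iff.1 (Finite.of_injective _ this)

theorem Fill_card (R : Finset X → Finset X → Prop) : ∀ (w : List ℕ) (U : Finset X),
    ((Fill_finite R U w).toFinset.card : ℚ) =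
      KG Finset.card (fun U U' => if R U' U then 1 else 0) w U
  | [], U => by
    simp only [KG, Finset.card_eq_zero]
    split_ifs with h1
    · have : (Fill_finite R U []).toFinset = {fun _ => 0} := by
        ext t
        simp only [Set.Finite.mem_toFinset, Finset.mem_singleton]
        subst h1
        constructor
        · intro ht
          funext x
          have := (ht.1 x).not.2 (by simp)
          omega
        · rintro rfl
          refine ⟨by simp, by simp [wt], by simp⟩
      rw [this]; simp
    · norm_cast
      rw [Finset.card_eq_zero]
      ext t
      simp only [Set.Finite.mem_toFinset, Finset.notMem_empty, iff_false]
      intro ht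
      obtain ⟨x, hx⟩ := Finset.nonempty_iff_ne_empty.2 h1
      have h2 := Fill_le ht x
      have h3 := (ht.1 x).2 hx
      simp at h2; omega
  | a :: w, U => by
    simp only [KG]
    rw [Finset.card_eq_sum_card_fiberwise (f := fun t => lev U t w.length) (t := Finset.Iic U)]
    · push_cast
      refine Finset.sum_congr rfl fun U' hU' => ?_
      rw [Finset.mem_Iic] at hU'
      rw [← Fill_card R w U']
      have key : ∀ t ∈ Fill R U (a :: w), lev U t w.length = U' →
          R U' U ∧ U.card = U'.card + a := by
        intro t ht hl
        have h0 : lev U t (w.length + 1) = U := by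
          apply Finset.filter_true_of_mem
          intro x _
          simpa using Fill_le ht x
        constructor
        · have := ht.2.2 w.length (by simp)
          rwa [hl, h0] at this
        · have h1 := ht.2.1 (w.length + 1) (by omega)
          simp only [wt, if_true] at h1
          rw [← hl, ← h1, lev, ← Finset.card_filter_add_card_filter_not (s := U) (fun x => t x ≤ w.length)]
          congr 2
          apply Finset.filter_congr
          intro x _
          have := Fill_le ht x
          simp at this
          omega
      split_ifs with h1 h2
      · rw [one_mul]
        norm_cast
        refine Finset.card_nbij' (fun t x => if x ∈ U' then t x else 0)
          (fun t x => if x ∈ U' then t x else if x ∈ U then w.length + 1 else 0) ?_ ?_ ?_ ?_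
        · intro t ht
          simp only [Finset.coe_filter, Set.Finite.mem_toFinset, Set.mem_ofPred_eq] at ht
          obtain ⟨ht, hl⟩ := ht
          simp only [Finset.mem_coe, Set.Finite.mem_toFinset]
          have hU : ∀ x, x ∈ U' ↔ x ∈ U ∧ t x ≤ w.length := by
            intro x; rw [← hl]; simp [lev]
          have hlev : ∀ k ≤ w.length, lev U' (fun x => if x ∈ U' then t x else 0) k = lev U t k := by
            intro k hk
            ext x
            simp only [lev, Finset.mem_filter]
            constructor
            · rintro ⟨h3, h4⟩
              rw [if_pos h3] at h4
              exact ⟨hU' h3, h4⟩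
            · rintro ⟨h3, h4⟩
              have : x ∈ U' := (hU x).2 ⟨h3, by omega⟩
              rw [if_pos this]; exact ⟨this, h4⟩
          refine ⟨?_, ?_, ?_⟩
          · intro x
            beta_reduce
            split_ifs with h3
            · simp [h3, ht.1 x, hU' h3]
            · simp [h3]
          · intro i hi
            by_cases h3 : i ≤ w.length
            · have := ht.2.1 i hi
              rw [wt, if_neg (by omega)] at this
              rw [← this]
              congr 1
              ext x
              simp only [Finset.mem_filter]
              constructor
              · rintro ⟨h5, h4⟩
                rw [if_pos h5] at h4
                exact ⟨hU' h5, h4⟩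
              · rintro ⟨h5, h4⟩
                have : x ∈ U' := (hU x).2 ⟨h5, by omega⟩
                rw [if_pos this]; exact ⟨this, h4⟩
            · rw [wt_big _ _ (by omega), Finset.card_eq_zero]
              apply Finset.filter_false_of_mem
              intro x hx
              beta_reduce
              rw [if_pos hx]
              have := (hU x).1 hx
              omega
          · intro k hk
            rw [hlev k (by omega), hlev (k+1) (by omega)]
            exact ht.2.2 k (by simp; omega)
        · intro t ht
          simp only [Finset.mem_coe, Set.Finite.mem_toFinset] at ht
          simp only [Finset.coe_filter, Set.Finite.mem_toFinset, Set.mem_ofPred_eq]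
          have hle := fun x => Fill_le ht x
          have hlev : ∀ k ≤ w.length, lev U (fun x => if x ∈ U' then t x else if x ∈ U then w.length + 1 else 0) k = lev U' t k := by
            intro k hk
            ext x
            simp only [lev, Finset.mem_filter]
            constructor
            · rintro ⟨h3, h4⟩
              split_ifs at h4 with h5
              · exact ⟨h5, h4⟩
              · omega
            · rintro ⟨h3, h4⟩
              rw [if_pos h3]; exact ⟨hU' h3, h4⟩
          have hl0 : lev U' t w.length = U' := by
            apply Finset.filter_true_of_mem
            intro x _
            exact hle x
          refine ⟨⟨?_, ?_, ?_⟩, ?_⟩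
          · intro x
            beta_reduce
            split_ifs with h3 h4
            · simp [ht.1 x, hU' h3, h3]
            · simp [h4]
            · simp [h4]
          · intro i hi
            rw [wt]
            split_ifs with h3
            · have : (U.filter (fun x => (if x ∈ U' then t x else if x ∈ U then w.length + 1 else 0) = i)) = U \ U' := by
                ext x
                simp only [Finset.mem_filter, Finset.mem_sdiff]
                constructor
                · rintro ⟨h5, h4⟩
                  refine ⟨h5, fun h6 => ?_⟩
                  rw [if_pos h6] at h4
                  have := hle x
                  omega
                · rintro ⟨h5, h4⟩
                  rw [if_neg h4, if_pos h5]; exact ⟨h5, h3.symm⟩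
              rw [this, Finset.card_sdiff_of_subset hU']
              omega
            · rw [← ht.2.1 i hi]
              congr 1
              ext x
              simp only [Finset.mem_filter]
              constructor
              · rintro ⟨h5, h4⟩
                split_ifs at h4 with h6
                · exact ⟨h6, h4⟩
                · omega
              · rintro ⟨h5, h4⟩
                rw [if_pos h5]; exact ⟨hU' h5, h4⟩
          · intro k hk
            simp only [List.length_cons] at hk
            rw [hlev k (by omega)]
            rcases Nat.lt_or_ge k w.length with h3 | h3
            · rw [hlev (k+1) (by omega)]
              exact ht.2.2 k h3
            · have h4 : k = w.length := by omega
              subst h4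
              rw [hl0]
              convert h2 using 1
              apply Finset.filter_true_of_mem
              intro x _
              have := hle x
              beta_reduce
              split_ifs <;> omega
          · rw [hlev _ le_rfl, hl0]
        · intro t ht
          simp only [Finset.coe_filter, Set.Finite.mem_toFinset, Set.mem_ofPred_eq] at ht
          obtain ⟨ht, hl⟩ := ht
          funext x
          have hU : x ∈ U' ↔ x ∈ U ∧ t x ≤ w.length := by
            rw [← hl]; simp [lev]
          have h5 := Fill_le ht x
          have h6 := ht.1 x
          simp only [List.length_cons] at h5
          simp only
          split_ifs with h3 h4
          · rfl
          · have : ¬ t x ≤ w.length := fun h7 => h3 (hU.2 ⟨h4, h7⟩)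
            omega
          · have := h6.not.2 h4
            omega
        · intro t ht
          simp only [Finset.mem_coe, Set.Finite.mem_toFinset] at ht
          funext x
          have h6 := ht.1 x
          simp only
          split_ifs with h3
          · rfl
          · have := h6.not.2 h3
            omega
      · rw [zero_mul]
        norm_cast
        rw [Finset.card_eq_zero]
        apply Finset.filter_false_of_mem
        intro t ht hl
        exact h2 (key t (by simpa using ht) hl).1
      · norm_cast
        rw [Finset.card_eq_zero]
        apply Finset.filter_false_of_mem
        intro t ht hl
        exact h1 (key t (by simpa using ht) hl).2
    · intro t _
      simp only [Finset.mem_coe, Finset.mem_Iic]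
      exact Finset.filter_subset _ _

end Fill
/-! ### Graph side -/

section GraphSide
variable {V : Type*} [Fintype V] (G : SimpleGraph V)

def RX (U' U : Finset V) : Prop := ∀ u, (u ∈ U ∧ u ∉ U') → ∀ v, (v ∈ U ∧ v ∉ U') → ¬ G.Adj u v

noncomputable def hX (U U' : Finset V) : ℚ := if RX G U' U then 1 else 0

theorem card_strictMono {X : Type*} : StrictMono (Finset.card : Finset X → ℕ) :=
  fun _ _ h => Finset.card_lt_card h

theorem XCoeff_eq (w : List ℕ) : XCoeff G (wt w) = KG Finset.card (hX G) w Finset.univ := by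
  have h1 := Fill_card (RX G) w Finset.univ
  have h2 : (fun U U' => if RX G U' U then (1:ℚ) else 0) = hX G := rfl
  rw [h2] at h1
  rw [← h1, XCoeff]
  congr 1
  have h3 : {f : V → ℕ | IsProperColoring G f ∧ ∀ i, Nat.card {v : V // f v = i} = wt w i}
      = Fill (RX G) Finset.univ w := by
    have hc : ∀ (f : V → ℕ) i, Nat.card {v : V // f v = i} =
        (Finset.univ.filter (fun x => f x = i)).card := by
      intro f i
      rw [Nat.card_eq_fintype_card, Fintype.card_subtype]
    ext f
    constructor
    · rintro ⟨⟨hp, ha⟩, hw⟩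
      refine ⟨fun x => by simp [hp x], fun i _ => by rw [← hc, hw], ?_⟩
      intro k _ u ⟨hu, hu'⟩ v ⟨hv, hv'⟩ hadj
      simp only [lev, Finset.mem_filter, Finset.mem_univ, true_and] at hu hv hu' hv'
      exact ha u v hadj (by omega)
    · intro hf
      have hp : ∀ v, 0 < f v := fun v => by rw [hf.1 v]; simp
      refine ⟨⟨hp, ?_⟩, ?_⟩
      · intro u v hadj he
        have h4 := Fill_le hf u
        have h5 := hp u
        have := hf.2.2 (f u - 1) (by omega) u
        simp only [lev, Finset.mem_filter, Finset.mem_univ, true_and] at this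
        exact this (by omega) v (by omega) hadj
      · intro i
        rcases Nat.eq_zero_or_pos i with rfl | hi
        · rw [hc, wt_zero, Finset.card_eq_zero]
          apply Finset.filter_false_of_mem
          intro x _ hx
          have := hp x
          omega
        · rw [hc, hf.2.1 i hi]
  rw [← Set.ncard_eq_toFinset_card _ (Fill_finite _ _ _), ← h3]
  rfl

theorem XCoeff_supp (μ : ℕ → ℕ) (h : XCoeff G μ ≠ 0) : ∃ w, μ = wt w := by
  have : Nonempty {f : V → ℕ //
    IsProperColoring G f ∧ ∀ i, Nat.card {v : V // f v = i} = μ i} := by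
    by_contra hn
    rw [not_nonempty_iff] at hn
    apply h
    rw [XCoeff, Nat.card_of_isEmpty]; rfl
  obtain ⟨f, hf, hw⟩ := this
  obtain ⟨w, _, h⟩ := exists_wt (∑ v, f v) μ (by
    rw [← hw 0, Nat.card_eq_zero]
    left
    constructor
    rintro ⟨v, hv⟩
    have := hf.1 v
    omega) (by
    intro i hi
    rw [← hw i, Nat.card_eq_zero]
    left
    constructor
    rintro ⟨v, hv⟩
    have := Finset.single_le_sum (f := f) (fun _ _ => Nat.zero_le _) (Finset.mem_univ v)
    omega)
  exact ⟨w, h⟩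

theorem hX_self (s : Finset V) : hX G s s = 1 := by
  rw [hX, if_pos]
  intro u hu
  exact absurd hu.1 hu.2

theorem hX_swap_le (s ρ : Finset V) (a b : ℕ) (hρ : ρ ≤ s) :
      (∑ κ ∈ Finset.Iic s, 
      if ρ ≤ κ ∧ s.card = κ.card + a ∧ κ.card = ρ.card + b then hX G s κ * hX G κ ρ else 0) =
      (∑ κ ∈ Finset.Iic s, 
      if ρ ≤ κ ∧ s.card = κ.card + b ∧ κ.card = ρ.card + a then hX G s κ * hX G κ ρ else 0) := by
  have k1 : ∀ κ, κ ≤ s → ρ ≤ κ → s \ (ρ ∪ (s \ κ)) = κ \ ρ := by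
    intro κ h1 h2; ext x
    have := @h1 x; have := @h2 x; have := @hρ x
    simp only [Finset.mem_sdiff, Finset.mem_union]; tauto
  have k2 : ∀ κ, κ ≤ s → ρ ≤ κ → (ρ ∪ (s \ κ)) \ ρ = s \ κ := by
    intro κ h1 h2; ext x
    have := @h1 x; have := @h2 x; have := @hρ x
    simp only [Finset.mem_sdiff, Finset.mem_union]; tauto
  have k3 : ∀ κ, κ ≤ s → ρ ≤ κ → ρ ∪ (s \ (ρ ∪ (s \ κ))) = κ := by
    intro κ h1 h2; ext x
    have := @h1 x; have := @h2 x; have := @hρ x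
    simp only [Finset.mem_sdiff, Finset.mem_union]; tauto
  have k4 : ∀ κ, κ ≤ s → ρ ≤ κ → (ρ ∪ (s \ κ)).card + κ.card = ρ.card + s.card := by
    intro κ h1 h2
    rw [Finset.card_union_of_disjoint, Finset.card_sdiff_of_subset h1]
    · have := Finset.card_le_card h1
      omega
    · rw [Finset.disjoint_left]
      intro x hx
      have := h2 hx
      simp [this]
  rw [← Finset.sum_filter, ← Finset.sum_filter]
  have hmem : ∀ a b, ∀ κ ∈ (Finset.Iic s).filter
      (fun κ => ρ ≤ κ ∧ s.card = κ.card + a ∧ κ.card = ρ.card + b),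
      ρ ∪ (s \ κ) ∈ (Finset.Iic s).filter
      (fun κ => ρ ≤ κ ∧ s.card = κ.card + b ∧ κ.card = ρ.card + a) := by
    intro a b κ hκ
    simp only [Finset.mem_filter, Finset.mem_Iic] at hκ ⊢
    obtain ⟨h1, h2, h3, h4⟩ := hκ
    have := k4 κ h1 h2
    refine ⟨Finset.union_subset hρ Finset.sdiff_subset, Finset.subset_union_left, by omega, by omega⟩
  refine Finset.sum_nbij' (fun κ => ρ ∪ (s \ κ)) (fun κ => ρ ∪ (s \ κ)) (hmem a b) (hmem b a)
    ?_ ?_ ?_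
  · intro κ hκ
    simp only [Finset.mem_filter, Finset.mem_Iic] at hκ
    exact k3 κ hκ.1 hκ.2.1
  · intro κ hκ
    simp only [Finset.mem_filter, Finset.mem_Iic] at hκ
    exact k3 κ hκ.1 hκ.2.1
  · intro κ hκ
    simp only [Finset.mem_filter, Finset.mem_Iic] at hκ
    have e1 : RX G (ρ ∪ (s \ κ)) s ↔ RX G ρ κ := by
      have hm : ∀ x, (x ∈ s ∧ x ∉ ρ ∪ (s \ κ)) ↔ (x ∈ κ ∧ x ∉ ρ) := fun x => by
        rw [← Finset.mem_sdiff, k1 κ hκ.1 hκ.2.1, Finset.mem_sdiff]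
      simp only [RX, hm]
    have e2 : RX G ρ (ρ ∪ (s \ κ)) ↔ RX G κ s := by
      have hm : ∀ x, (x ∈ ρ ∪ (s \ κ) ∧ x ∉ ρ) ↔ (x ∈ s ∧ x ∉ κ) := fun x => by
        rw [← Finset.mem_sdiff, k2 κ hκ.1 hκ.2.1, Finset.mem_sdiff]
      simp only [RX, hm]
    simp only [hX, e1, e2]
    rw [mul_comm]

end GraphSide

section Net
variable (C D : ℕ)

noncomputable def wI (I : Finset (Fin (C + D))) (j : Fin C) : ℚ :=
  if Fin.castAdd D j ∈ I then 2 else 1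

noncomputable def Aw (U : Finset (Fin (C + D) ⊕ Fin C)) : ℚ :=
  (U.toLeft.card).factorial * ∏ j ∈ U.toRight, wI C D U.toLeft j

theorem stable_iff (I : Finset (Fin (C + D))) (J : Finset (Fin C)) :
    (∀ u ∈ I.disjSum J, ∀ v ∈ I.disjSum J, ¬ (genNet (C + D) C).Adj u v) ↔
      I.card ≤ 1 ∧ ∀ j ∈ J, Fin.castAdd D j ∉ I := by
  constructor
  · intro h
    constructor
    · rw [Finset.card_le_one]
      intro a ha b hb
      by_contra hab
      exact h (Sum.inl a) (by simpa using ha) (Sum.inl b) (by simpa using hb)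
        (by simp [genNet, hab])
    · intro j hj hj'
      exact h (Sum.inl _) (by simpa using hj') (Sum.inr j) (by simpa using hj)
        (by simp [genNet])
  · rintro ⟨h1, h2⟩ u hu v hv hadj
    rw [Finset.card_le_one] at h1
    rcases u with a | j <;> rcases v with b | k
    · simp only [Finset.inl_mem_disjSum] at hu hv
      simp [genNet] at hadj
      exact hadj (h1 a hu b hv)
    · simp only [Finset.inl_mem_disjSum, Finset.inr_mem_disjSum] at hu hv
      simp [genNet] at hadj
      apply h2 k hv
      convert hu
      ext; simp [hadj]
    · simp only [Finset.inl_mem_disjSum, Finset.inr_mem_disjSum] at hu hv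
      simp [genNet] at hadj
      apply h2 j hu
      convert hv
      ext; simp [hadj]
    · simp [genNet] at hadj

theorem sum_card_le_one {α : Type*} (I : Finset α) (f : Finset α → ℚ)
    (hf : ∀ T, 1 < T.card → f T = 0) :
    ∑ T ∈ I.powerset, f T = f ∅ + ∑ b ∈ I, f {b} := by
  have h1 : insert ∅ (I.image fun b => ({b} : Finset α)) ⊆ I.powerset := by
    intro T hT
    simp only [Finset.mem_insert, Finset.mem_image] at hT
    rcases hT with rfl | ⟨b, hb, rfl⟩
    · simp
    · simpa using hb
  rw [← Finset.sum_subset h1, Finset.sum_insert (by simp), Finset.sum_image (by simp)]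
  intro T hT hT'
  apply hf
  by_contra hc
  apply hT'
  have : T.card = 0 ∨ T.card = 1 := by omega
  rcases this with h | h
  · simp [Finset.card_eq_zero.1 h]
  · obtain ⟨b, rfl⟩ := Finset.card_eq_one.1 h
    simp at hT ⊢
    exact hT

theorem sum_disjSum {α β : Type*} (I : Finset α) (J : Finset β) (f : Finset (α ⊕ β) → ℚ) :
    ∑ T ∈ (I.disjSum J).powerset, f T =
      ∑ I' ∈ I.powerset, ∑ J' ∈ J.powerset, f (I'.disjSum J') := by
  rw [← Finset.sum_product']
  refine Finset.sum_nbij' (fun T => (T.toLeft, T.toRight)) (fun p => p.1.disjSum p.2) ?_ ?_ ?_ ?_ ?_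
  · intro T hT
    simp only [Finset.mem_powerset, Finset.mem_product] at hT ⊢
    constructor
    · intro x hx
      have := hT (Finset.mem_toLeft.1 hx)
      simpa using this
    · intro x hx
      have := hT (Finset.mem_toRight.1 hx)
      simpa using this
  · rintro ⟨I', J'⟩ h
    simp only [Finset.mem_powerset, Finset.mem_product] at h ⊢
    exact Finset.disjSum_mono h.1 h.2
  · intro T _; simp [Finset.toLeft_disjSum_toRight]
  · rintro ⟨I', J'⟩ _; simp
  · intro T _; simp [Finset.toLeft_disjSum_toRight]

theorem Aw_main (U : Finset (Fin (C + D) ⊕ Fin C)) (hU : U ≠ ∅) :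
    ∑ T ∈ U.powerset, (if ∀ u ∈ T, ∀ v ∈ T, ¬ (genNet (C + D) C).Adj u v then
      (-1 : ℚ) ^ T.card * Aw C D (U \ T) else 0) = 0 := by
  obtain ⟨I, J, rfl⟩ : ∃ I J, U = Finset.disjSum I J :=
    ⟨U.toLeft, U.toRight, Finset.toLeft_disjSum_toRight.symm⟩
  rw [sum_disjSum]
  have hsd : ∀ I' J', I.disjSum J \ Finset.disjSum I' J' = (I \ I').disjSum (J \ J') := by
    intro I' J'
    ext x
    rcases x with x | x <;> simp
  simp only [stable_iff, hsd, Aw, Finset.toLeft_disjSum, Finset.toRight_disjSum,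
    Finset.card_disjSum]
  rw [sum_card_le_one]
  · have e0 : (∑ J' ∈ J.powerset, if (∅ : Finset (Fin (C+D))).card ≤ 1 ∧ ∀ j ∈ J', Fin.castAdd D j ∉ (∅ : Finset (Fin (C+D))) then
        (-1 : ℚ) ^ ((∅ : Finset (Fin (C+D))).card + J'.card) * (((I \ ∅).card.factorial : ℚ) * ∏ j ∈ J \ J', wI C D (I \ ∅) j) else 0)
        = I.card.factorial * ∏ j ∈ J, (-1 + wI C D I j) := by
      rw [Finset.prod_add, Finset.mul_sum]
      refine Finset.sum_congr rfl fun J' _ => ?_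
      simp
      ring
    have e1 : ∀ b ∈ I, (∑ J' ∈ J.powerset, if ({b} : Finset (Fin (C+D))).card ≤ 1 ∧ ∀ j ∈ J', Fin.castAdd D j ∉ ({b} : Finset (Fin (C+D))) then
        (-1 : ℚ) ^ (({b} : Finset (Fin (C+D))).card + J'.card) * (((I \ {b}).card.factorial : ℚ) * ∏ j ∈ J \ J', wI C D (I \ {b}) j) else 0)
        = - ((I.card - 1).factorial * ∏ j ∈ J, (-1 + wI C D I j)) := by
      intro b hb
      have : ∏ j ∈ J, (-1 + wI C D I j) =
          ∏ j ∈ J, ((if Fin.castAdd D j = b then 0 else -1) + wI C D (I \ {b}) j) := by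
        refine Finset.prod_congr rfl fun j _ => ?_
        simp only [wI, Finset.mem_sdiff, Finset.mem_singleton]
        by_cases h : Fin.castAdd D j = b
        · simp [h, hb]; norm_num
        · simp [h]
      rw [this, Finset.prod_add, Finset.mul_sum, ← Finset.sum_neg_distrib]
      refine Finset.sum_congr rfl fun J' _ => ?_
      rw [Finset.card_sdiff_of_subset (by simpa using hb)]
      simp only [Finset.card_singleton, le_refl, true_and, Finset.mem_singleton]
      split_ifs with h
      · have : ∏ j ∈ J', (if Fin.castAdd D j = b then (0:ℚ) else -1) = (-1) ^ J'.card := by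
          rw [← Finset.prod_const]
          refine Finset.prod_congr rfl fun j hj => ?_
          rw [if_neg (h j hj)]
        rw [this]; ring
      · push Not at h
        obtain ⟨j, hj, hjb⟩ := h
        rw [Finset.prod_eq_zero hj (by simp [hjb])]
        simp
    rw [e0, Finset.sum_congr rfl e1]
    rw [Finset.sum_const, nsmul_eq_mul]
    rcases Finset.eq_empty_or_nonempty I with rfl | hI
    · have hJ : J.Nonempty := by
        rw [Finset.nonempty_iff_ne_empty]
        rintro rfl
        exact hU (by simp)
      obtain ⟨j, hj⟩ := hJ
      rw [Finset.prod_eq_zero hj (by simp [wI])]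
      simp
    · have := hI.card_pos
      obtain ⟨c, hc⟩ : ∃ c, I.card = c + 1 := ⟨I.card - 1, by omega⟩
      rw [hc, Nat.factorial_succ]
      push_cast
      simp
      ring
  · intro T hT
    refine Finset.sum_eq_zero fun J' _ => ?_
    rw [if_neg (by omega)]

theorem Aw_empty : Aw C D ∅ = 1 := by
  have h1 : (∅ : Finset (Fin (C + D) ⊕ Fin C)).toLeft = ∅ := by ext; simp
  have h2 : (∅ : Finset (Fin (C + D) ⊕ Fin C)).toRight = ∅ := by ext; simp
  simp [Aw, h1, h2]

theorem Aw_hv (s ρ : Finset (Fin (C + D) ⊕ Fin C)) (hρ : ρ < s) :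
    Aw C D (s \ ρ) = ∑ κ ∈ Finset.Iic s, if ρ < κ then
        (-1) ^ (κ.card + ρ.card + 1) * Aw C D (s \ κ) * hX (genNet (C + D) C) κ ρ else 0 := by
  have h1 := Aw_main C D (s \ ρ) (by
    intro h
    rw [Finset.sdiff_eq_empty_iff_subset] at h
    exact absurd hρ (not_lt_of_ge h))
  rw [← Finset.add_sum_erase _ _ (Finset.empty_mem_powerset _)] at h1
  simp only [Finset.notMem_empty, false_imp_iff, implies_true, if_true, Finset.card_empty,
    pow_zero, one_mul, Finset.sdiff_empty] at h1
  rw [add_eq_zero_iff_eq_neg] at h1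
  rw [h1, ← Finset.sum_neg_distrib, ← Finset.sum_filter]
  refine Finset.sum_nbij' (fun T => ρ ∪ T) (fun κ => κ \ ρ) ?_ ?_ ?_ ?_ ?_
  · intro T hT
    simp only [Finset.mem_erase, Finset.mem_powerset, Finset.mem_filter, Finset.mem_Iic] at hT ⊢
    have hd : Disjoint ρ T := by
      rw [Finset.disjoint_left]; intro x hx hx'
      have := hT.2 hx'
      simp at this; exact this.2 hx
    refine ⟨Finset.union_subset hρ.le (hT.2.trans Finset.sdiff_subset), ?_⟩
    refine lt_of_le_of_ne Finset.subset_union_left ?_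
    intro h
    apply hT.1
    have : T ⊆ ρ := by rw [h]; exact Finset.subset_union_right
    exact (Finset.disjoint_of_subset_left this hd).eq_bot_of_self
  · intro κ hκ
    simp only [Finset.mem_erase, Finset.mem_powerset, Finset.mem_filter, Finset.mem_Iic] at hκ ⊢
    refine ⟨?_, Finset.sdiff_subset_sdiff hκ.1 subset_rfl⟩
    intro h
    rw [Finset.sdiff_eq_empty_iff_subset] at h
    exact absurd hκ.2 (not_lt_of_ge h)
  · intro T hT
    simp only [Finset.mem_erase, Finset.mem_powerset] at hT
    ext x
    have := @hT.2 x
    simp only [Finset.mem_sdiff, Finset.mem_union] at this ⊢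
    tauto
  · intro κ hκ
    simp only [Finset.mem_filter, Finset.mem_Iic] at hκ
    exact Finset.union_sdiff_of_subset hκ.2.le
  · intro T hT
    simp only [Finset.mem_erase, Finset.mem_powerset] at hT
    have hd : Disjoint ρ T := by
      rw [Finset.disjoint_left]; intro x hx hx'
      have := hT.2 hx'
      simp at this; exact this.2 hx
    have e1 : (ρ ∪ T) \ ρ = T := by
      rw [Finset.union_sdiff_left, Finset.sdiff_eq_self_of_disjoint hd.symm]
    have e2 : s \ (ρ ∪ T) = (s \ ρ) \ T := by
      rw [Finset.sdiff_union_distrib]; ext x; simp; tauto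
    have e3 : RX (genNet (C + D) C) ρ (ρ ∪ T) ↔
        ∀ u ∈ T, ∀ v ∈ T, ¬ (genNet (C + D) C).Adj u v := by
      have hm : ∀ x, (x ∈ ρ ∪ T ∧ x ∉ ρ) ↔ x ∈ T := fun x => by
        rw [← Finset.mem_sdiff, e1]
      simp only [RX, hm]
    rw [e2, Finset.card_union_of_disjoint hd, hX]
    have : ρ.card + T.card + ρ.card + 1 = T.card + 2 * ρ.card + 1 := by ring
    rw [this, pow_succ, pow_add, pow_mul]
    by_cases h : ∀ u ∈ T, ∀ v ∈ T, ¬ (genNet (C + D) C).Adj u v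
    · rw [if_pos h, if_pos (e3.2 h)]; simp
    · rw [if_neg h, if_neg (fun h' => h (e3.1 h'))]; simp

/-- the value of the functional on the graph side -/
theorem EE_net (a b : ℕ) (hab : a + b = 2 * C + D) :
    EE (EE (fun w => KG Finset.card (hX (genNet (C + D) C)) w Finset.univ) b) a [] =
      ∑ R : Finset (Fin (C + D) ⊕ Fin C), if R.card = b then Aw C D R * Aw C D Rᶜ else 0 := by
  have hE := EE_KG (σ := Finset (Fin (C + D) ⊕ Fin C)) Finset.card (hX (genNet (C + D) C))
    (fun s ρ => Aw C D (s \ ρ)) (fun _ => True) card_strictMono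
    (fun s _ => by simp [Aw_empty]) (fun s ρ _ h => by
      have := Aw_hv C D s ρ h
      convert this)
  have hcard : (Finset.univ : Finset (Fin (C + D) ⊕ Fin C)).card = 2 * C + D := by
    simp; ring
  have e1 : EE (fun w => KG Finset.card (hX (genNet (C + D) C)) w Finset.univ) b =
      fun w => ∑ ρ ∈ Finset.Iic (Finset.univ : Finset (Fin (C + D) ⊕ Fin C)),
        (if 2 * C + D = ρ.card + b then Aw C D (Finset.univ \ ρ) else 0) *
          KG Finset.card (hX (genNet (C + D) C)) w ρ := by
    funext w
    rw [hE b _ trivial, hcard]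
    refine Finset.sum_congr rfl fun ρ _ => ?_
    split_ifs <;> simp
  rw [e1, EE_sum]
  have e2 : Finset.Iic (Finset.univ : Finset (Fin (C + D) ⊕ Fin C)) = Finset.univ := by
    ext x; simp
  rw [e2]
  refine Finset.sum_bij' (fun R _ => Rᶜ) (fun R _ => Rᶜ) (by simp) (by simp) (by simp) (by simp) ?_
  intro ρ _
  have hc := Finset.card_add_card_compl ρ
  rw [← Finset.card_univ, hcard] at hc
  rw [← Finset.compl_eq_univ_sdiff, compl_compl]
  by_cases h1 : ρᶜ.card = b
  · rw [if_pos (by omega), if_pos h1, hE a _ trivial]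
    congr 1
    rw [Finset.sum_eq_single_of_mem ∅ (by simp)]
    · rw [if_pos (by simp; omega)]; simp [KG]
    · intro R _ hR
      simp [KG, hR]
  · rw [if_neg (by omega), if_neg h1]; simp

end Net
/-! ### Polynomial identities -/

section Poly
open Polynomial

noncomputable def gco (C D b : ℕ) : ℚ :=
  ∑ R : Finset (Fin (C + D) ⊕ Fin C), if R.card = b then Aw C D R * Aw C D Rᶜ else 0

noncomputable def PP (C D : ℕ) : ℚ[X] :=
  ∑ R : Finset (Fin (C + D) ⊕ Fin C), Polynomial.C (Aw C D R * Aw C D Rᶜ) * X ^ R.card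

theorem PP_coeff (C D b : ℕ) : (PP C D).coeff b = gco C D b := by
  simp only [PP, gco, finsetSum_coeff, coeff_C_mul_X_pow]
  refine Finset.sum_congr rfl fun R _ => ?_
  by_cases h : R.card = b
  · rw [if_pos h, if_pos h.symm]
  · rw [if_neg h, if_neg (Ne.symm h)]

theorem gco_symm (C D a b : ℕ) (hab : a + b = 2 * C + D) : gco C D a = gco C D b := by
  refine Finset.sum_bij' (fun R _ => Rᶜ) (fun R _ => Rᶜ) (by simp) (by simp) (by simp) (by simp) ?_
  intro R _
  have hc := Finset.card_add_card_compl R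
  have hcard : Fintype.card (Fin (C + D) ⊕ Fin C) = 2 * C + D := by
    simp; ring
  rw [hcard] at hc
  rw [compl_compl]
  by_cases h : R.card = a
  · rw [if_pos h, if_pos (by omega), mul_comm]
  · rw [if_neg h, if_neg (by omega)]

noncomputable def Lf (n : ℕ) (p : ℚ[X][X]) : ℚ[X] :=
  ∑ i ∈ Finset.range (n + 1), p.coeff i * ((i.factorial * (n - i).factorial : ℕ) : ℚ[X])

theorem Lf_add (n : ℕ) (p r : ℚ[X][X]) : Lf n (p + r) = Lf n p + Lf n r := by
  simp only [Lf, coeff_add, add_mul, Finset.sum_add_distrib]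

theorem Lf_C_mul (n : ℕ) (a : ℚ[X]) (p : ℚ[X][X]) : Lf n (Polynomial.C a * p) = a * Lf n p := by
  simp only [Lf, coeff_C_mul, Finset.mul_sum, mul_assoc]

theorem Lf_sum {ι : Type*} (n : ℕ) (s : Finset ι) (f : ι → ℚ[X][X]) :
    Lf n (∑ i ∈ s, f i) = ∑ i ∈ s, Lf n (f i) := by
  simp only [Lf, finsetSum_coeff, Finset.sum_mul]
  rw [Finset.sum_comm]

theorem Lf_x (k : ℕ) (Q : ℚ[X][X]) :
    Lf k (derivative Q) = Lf (k + 1) Q - Q.coeff 0 * ((k + 1).factorial : ℕ) := by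
  simp only [Lf]
  rw [Finset.sum_range_succ' _ (k + 1)]
  simp only [Nat.factorial_zero, one_mul, Nat.sub_zero, add_sub_cancel_right]
  refine Finset.sum_congr rfl fun i _ => ?_
  rw [coeff_derivative, Nat.factorial_succ i, Nat.add_sub_add_right]
  push_cast
  ring

theorem Lf_y (k : ℕ) (Q : ℚ[X][X]) :
    Lf k (((k + 1 : ℕ) : ℚ[X][X]) * Q - X * derivative Q) =
      Lf (k + 1) Q - Q.coeff (k + 1) * ((k + 1).factorial : ℕ) := by
  simp only [Lf]
  rw [Finset.sum_range_succ _ (k + 1)]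
  simp only [Nat.factorial_zero, mul_one, Nat.sub_self, add_sub_cancel_right]
  refine Finset.sum_congr rfl fun i hi => ?_
  have hi' : i ≤ k := by simpa [Nat.lt_succ_iff] using hi
  have e : (X * derivative Q).coeff i = i * Q.coeff i := by
    cases i with
    | zero => simp
    | succ i => rw [coeff_X_mul, coeff_derivative]; push_cast; ring
  rw [coeff_sub, e, coeff_natCast_mul]
  obtain ⟨j, rfl⟩ := Nat.exists_eq_add_of_le hi'
  have h1 : i + j + 1 - i = j + 1 := by omega
  have h2 : i + j - i = j := by omega
  rw [h1, h2, Nat.factorial_succ j]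
  push_cast
  ring

noncomputable def QA : ℚ[X][X] := Polynomial.C (X * (2 * X + 1)) * X + Polynomial.C (X + 2)
noncomputable def QB : ℚ[X][X] := Polynomial.C X * X + Polynomial.C 1

theorem PP_eq (c d : ℕ) : PP c d = Lf (c + d) (QA ^ c * QB ^ d) := by
  let u : Fin (c + d) → ℚ[X] := Fin.append (fun _ : Fin c => X * (2 * X + 1)) (fun _ : Fin d => X)
  let v : Fin (c + d) → ℚ[X] := Fin.append (fun _ : Fin c => X + 2) (fun _ : Fin d => 1)
  have h1 : QA ^ c * QB ^ d = ∏ b : Fin (c + d), (Polynomial.C (u b) * X + Polynomial.C (v b)) := by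
    rw [Fin.prod_univ_add]
    simp [u, v, QA, QB]
  have h2 : QA ^ c * QB ^ d = ∑ I : Finset (Fin (c + d)),
      Polynomial.C ((∏ b ∈ I, u b) * ∏ b ∈ Iᶜ, v b) * X ^ I.card := by
    rw [h1, Finset.prod_add, Finset.powerset_univ]
    refine Finset.sum_congr rfl fun I _ => ?_
    rw [Finset.prod_mul_distrib, Finset.prod_const, ← Finset.compl_eq_univ_sdiff, map_mul,
      map_prod, map_prod]
    ring
  have h3 : ∀ I : Finset (Fin (c + d)), Lf (c + d) (X ^ I.card) =
      ((I.card.factorial * (Iᶜ.card).factorial : ℕ) : ℚ[X]) := by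
    intro I
    have hI : I.card ≤ c + d := by simpa using Finset.card_le_univ I
    rw [Lf, Finset.sum_eq_single_of_mem I.card (by simp; omega)]
    · rw [coeff_X_pow, if_pos rfl, one_mul, Finset.card_compl, Fintype.card_fin]
    · intro i _ hi
      rw [coeff_X_pow, if_neg hi, zero_mul]
  rw [h2, Lf_sum]
  simp only [Lf_C_mul, h3]
  rw [PP]
  rw [← Finset.powerset_univ, ← Finset.univ_disjSum_univ]
  have h4 : ∀ (f : Finset (Fin (c + d) ⊕ Fin c) → ℚ[X]),
    ∑ T ∈ ((Finset.univ : Finset (Fin (c + d))).disjSum (Finset.univ : Finset (Fin c))).powerset, f T =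
      ∑ I', ∑ J', f (Finset.disjSum I' J') := by
    intro f
    rw [← Finset.sum_product']
    refine Finset.sum_nbij' (fun T => (T.toLeft, T.toRight)) (fun p => p.1.disjSum p.2) ?_ ?_ ?_ ?_ ?_
    · intro T hT; simp
    · rintro ⟨I', J'⟩ h; simp
    · intro T _; simp [Finset.toLeft_disjSum_toRight]
    · rintro ⟨I', J'⟩ _; simp
    · intro T _; simp [Finset.toLeft_disjSum_toRight]
  rw [h4]
  refine Finset.sum_congr rfl fun I _ => ?_
  have h5 : ∀ J : Finset (Fin c), (I.disjSum J)ᶜ = Finset.disjSum Iᶜ Jᶜ := by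
    intro J; ext x; rcases x with x | x <;> simp
  simp only [h5, Aw, Finset.toLeft_disjSum, Finset.toRight_disjSum, Finset.card_disjSum]
  have h6 : (∏ b ∈ I, u b) * ∏ b ∈ Iᶜ, v b = X ^ I.card *
      ∏ j : Fin c, (Polynomial.C (wI c d I j) * X + Polynomial.C (wI c d Iᶜ j)) := by
    have e1 : (∏ b ∈ I, u b) * ∏ b ∈ Iᶜ, v b = ∏ b, if b ∈ I then u b else v b := by
      rw [Finset.prod_ite]
      congr 1
      · congr 1; ext; simp
      · congr 1; ext; simp
    have e2 : (X : ℚ[X]) ^ I.card = ∏ b : Fin (c + d), if b ∈ I then X else 1 := by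
      rw [Finset.prod_ite]; simp
    rw [e1, e2, Fin.prod_univ_add, Fin.prod_univ_add, mul_right_comm, ← Finset.prod_mul_distrib]
    congr 1
    · refine Finset.prod_congr rfl fun j _ => ?_
      by_cases h : Fin.castAdd d j ∈ I
      · have e2 : (2 : ℚ[X]) = Polynomial.C 2 := rfl
        simp [h, u, wI, e2]
      · have e2 : (2 : ℚ[X]) = Polynomial.C 2 := rfl
        simp [h, v, wI, e2]
    · refine Finset.prod_congr rfl fun j _ => ?_
      simp [u, v]
  rw [h6, Finset.prod_add, Finset.powerset_univ, Finset.mul_sum, Finset.sum_mul]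
  refine Finset.sum_congr rfl fun J _ => ?_
  rw [Finset.prod_mul_distrib, Finset.prod_const, ← Finset.compl_eq_univ_sdiff]
  simp only [map_mul, map_prod, pow_add, map_natCast]
  push_cast
  ring

theorem QA_deg : QA.natDegree ≤ 1 := by
  unfold QA; compute_degree
theorem QB_deg : QB.natDegree ≤ 1 := by
  unfold QB; compute_degree

theorem Q_top (c d : ℕ) : (QA ^ c * QB ^ d).coeff (c + d) = (X * (2 * X + 1)) ^ c * X ^ d := by
  have h1 : (QA ^ c).natDegree ≤ c := by
    simpa using natDegree_pow_le_of_le c QA_deg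
  have h2 : (QB ^ d).natDegree ≤ d := by
    simpa using natDegree_pow_le_of_le d QB_deg
  rw [coeff_mul_add_eq_of_natDegree_le h1 h2]
  have h3 := coeff_pow_of_natDegree_le (m := c) QA_deg
  have h4 := coeff_pow_of_natDegree_le (m := d) QB_deg
  rw [mul_one] at h3 h4
  rw [h3, h4]
  simp [QA, QB, coeff_one]

theorem Q_bot (c d : ℕ) : (QA ^ c * QB ^ d).coeff 0 = (X + 2) ^ c := by
  rw [coeff_zero_eq_eval_zero]
  simp [QA, QB]

theorem Q_deriv (c d : ℕ) : derivative (QA ^ c * QB ^ d) =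
    Polynomial.C ((c : ℚ[X]) * (X * (2 * X + 1))) * (QA ^ (c - 1) * QB ^ d) +
      Polynomial.C ((d : ℚ[X]) * X) * (QA ^ c * QB ^ (d - 1)) := by
  rw [derivative_mul, derivative_pow, derivative_pow]
  have h1 : derivative QA = Polynomial.C (X * (2 * X + 1)) := by
    simp [QA]
  have h2 : derivative QB = Polynomial.C X := by
    simp [QB]
  rw [h1, h2, map_mul Polynomial.C (c : ℚ[X]), map_mul Polynomial.C (d : ℚ[X])]
  simp only [map_natCast]
  ring

theorem Q_deriv' (c d : ℕ) : ((c + d : ℕ) : ℚ[X][X]) * (QA ^ c * QB ^ d) - X * derivative (QA ^ c * QB ^ d) =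
    Polynomial.C ((c : ℚ[X]) * (X + 2)) * (QA ^ (c - 1) * QB ^ d) +
      Polynomial.C (d : ℚ[X]) * (QA ^ c * QB ^ (d - 1)) := by
  rw [Q_deriv]
  have h1 : (c : ℚ[X][X]) * QA ^ c = c * (QA ^ (c - 1) * QA) := by
    cases c with
    | zero => simp
    | succ c => rw [pow_succ, Nat.add_sub_cancel]
  have h2 : (d : ℚ[X][X]) * QB ^ d = d * (QB ^ (d - 1) * QB) := by
    cases d with
    | zero => simp
    | succ d => rw [pow_succ, Nat.add_sub_cancel]
  have h3 : ((c + d : ℕ) : ℚ[X][X]) * (QA ^ c * QB ^ d) =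
    c * (QA ^ (c - 1) * QA) * QB ^ d + QA ^ c * (d * (QB ^ (d - 1) * QB)) := by
    rw [← h1, ← h2]; push_cast; ring
  rw [h3]
  have h4 : QA = Polynomial.C (X * (2 * X + 1)) * X + Polynomial.C (X + 2) := rfl
  have h5 : QB = Polynomial.C X * X + Polynomial.C 1 := rfl
  generalize QA ^ (c - 1) = A1
  generalize QA ^ c = A2
  generalize QB ^ (d - 1) = B1
  generalize QB ^ d = B2
  rw [h4, h5, map_mul Polynomial.C (c : ℚ[X]), map_mul Polynomial.C (c : ℚ[X]),
    map_mul Polynomial.C (d : ℚ[X])]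
  simp only [map_natCast, map_one]
  ring

theorem PP_pred (k c d : ℕ) (hk : c + d = k + 1) (a : ℚ[X]) :
    Lf k (Polynomial.C (c * a) * (QA ^ (c - 1) * QB ^ d)) = c * a * PP (c - 1) d := by
  rw [Lf_C_mul]
  cases c with
  | zero => simp
  | succ c => rw [PP_eq]; congr 2; omega

theorem PP_pred' (k c d : ℕ) (hk : c + d = k + 1) (a : ℚ[X]) :
    Lf k (Polynomial.C (d * a) * (QA ^ c * QB ^ (d - 1))) = d * a * PP c (d - 1) := by
  rw [Lf_C_mul]
  cases d with
  | zero => simp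
  | succ d => rw [PP_eq]; congr 2; omega

theorem PP_x (c d : ℕ) (hd : 1 ≤ d) : PP c d = (c : ℚ[X]) * (X * (2 * X + 1)) * PP (c - 1) d +
    (d : ℚ[X]) * X * PP c (d - 1) + (X + 2) ^ c * (((c + d).factorial : ℕ) : ℚ[X]) := by
  obtain ⟨k, hk⟩ : ∃ k, c + d = k + 1 := ⟨c + d - 1, by omega⟩
  have h := Lf_x k (QA ^ c * QB ^ d)
  rw [Q_deriv, Lf_add, PP_pred k c d hk, PP_pred' k c d hk, Q_bot, ← hk, ← PP_eq] at h
  rw [h]; ring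

theorem PP_y (c d : ℕ) (hd : 1 ≤ d) : PP c d = (c : ℚ[X]) * (X + 2) * PP (c - 1) d +
    (d : ℚ[X]) * PP c (d - 1) + (X * (2 * X + 1)) ^ c * X ^ d * (((c + d).factorial : ℕ) : ℚ[X]) := by
  obtain ⟨k, hk⟩ : ∃ k, c + d = k + 1 := ⟨c + d - 1, by omega⟩
  have h := Lf_y k (QA ^ c * QB ^ d)
  have e := PP_pred' k c d hk 1
  rw [mul_one] at e
  rw [← hk, Q_deriv', Lf_add, PP_pred k c d hk, e, Q_top, ← PP_eq] at h
  rw [h]; ring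

/-- coefficients of `(1 - X) * PP` -/
noncomputable def gf (c d j : ℕ) : ℚ := ((1 - X) * PP c d).coeff j

theorem gf_succ (c d j : ℕ) : gf c d (j + 1) = gco c d (j + 1) - gco c d j := by
  rw [gf, sub_mul, one_mul, coeff_sub, coeff_X_mul, PP_coeff, PP_coeff]

theorem gf_zero (c d : ℕ) : gf c d 0 = gco c d 0 := by
  rw [gf, sub_mul, one_mul, coeff_sub, coeff_X_mul_zero, PP_coeff, sub_zero]

theorem gf_y (c d j : ℕ) (hd : 1 ≤ d) (hj : j + 1 < c + d) :
    gf c d (j + 1) = c * (gf (c - 1) d j + 2 * gf (c - 1) d (j + 1)) + d * gf c (d - 1) (j + 1) := by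
  have h : (1 - X : ℚ[X]) * PP c d = Polynomial.C (c : ℚ) * (X * ((1 - X) * PP (c - 1) d)) +
      Polynomial.C (c * 2 : ℚ) * ((1 - X) * PP (c - 1) d) + Polynomial.C (d : ℚ) * ((1 - X) * PP c (d - 1)) +
      X ^ (c + d) * ((1 - X) * (2 * X + 1) ^ c * (((c + d).factorial : ℕ) : ℚ[X])) := by
    rw [PP_y c d hd, map_mul, mul_pow]
    simp only [map_natCast, map_ofNat]
    ring
  have h' := congrArg (fun p => p.coeff (j + 1)) h
  simp only [coeff_add, coeff_C_mul, coeff_X_mul, coeff_X_pow_mul'] at h'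
  rw [if_neg (by omega)] at h'
  simp only [gf]
  rw [h']; ring

theorem gf_x (c d j : ℕ) (hd : 1 ≤ d) (hj : c + 1 < j + 2) :
    gf c d (j + 2) = c * (gf (c - 1) d (j + 1) + 2 * gf (c - 1) d j) + d * gf c (d - 1) (j + 1) := by
  have h : (1 - X : ℚ[X]) * PP c d = Polynomial.C (c : ℚ) * (X * ((1 - X) * PP (c - 1) d)) +
      Polynomial.C (c * 2 : ℚ) * (X * (X * ((1 - X) * PP (c - 1) d))) +
      Polynomial.C (d : ℚ) * (X * ((1 - X) * PP c (d - 1))) +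
      (1 - X : ℚ[X]) * (X + 2) ^ c * (((c + d).factorial : ℕ) : ℚ[X]) := by
    rw [PP_x c d hd, map_mul]
    simp only [map_natCast, map_ofNat]
    ring
  have h' := congrArg (fun p => p.coeff (j + 2)) h
  have hz : ((1 - X) * (X + 2) ^ c * (((c + d).factorial : ℕ) : ℚ[X])).coeff (j + 2) = 0 := by
    apply coeff_eq_zero_of_natDegree_lt
    refine lt_of_le_of_lt ?_ hj
    have : ((1 - X) * (X + 2) ^ c * (((c + d).factorial : ℕ) : ℚ[X])).natDegree ≤ 1 + c * 1 + 0 := by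
      refine natDegree_mul_le_of_le (natDegree_mul_le_of_le ?_ ?_) ?_
      · compute_degree
      · refine natDegree_pow_le_of_le c ?_
        compute_degree
      · simp
    omega
  simp only [coeff_add, coeff_C_mul, coeff_X_mul, hz] at h'
  simp only [gf]
  rw [h']; ring

theorem gf_vanish (n : ℕ) : ∀ c d j, c + d = n → c < j → j ≤ c + d → gf c d j = 0 := by
  induction n using Nat.strong_induction_on with
  | _ n ih =>
    intro c d j hn hcj hj
    have hd : 1 ≤ d := by omega
    have A1 : ∀ i, c < i + 1 → i + 1 ≤ c + d → (c : ℚ) * gf (c - 1) d i = 0 := by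
      intro i h1 h2
      rcases Nat.eq_zero_or_pos c with rfl | hc
      · simp
      · rw [ih (c - 1 + d) (by omega) (c - 1) d i rfl (by omega) (by omega), mul_zero]
    have A2 : ∀ i, c < i → i + 1 ≤ c + d → gf c (d - 1) i = 0 := by
      intro i h1 h2
      exact ih (c + (d - 1)) (by omega) c (d - 1) i rfl (by omega) (by omega)
    rcases Nat.lt_or_ge j (c + d) with h | h
    · obtain ⟨i, rfl⟩ : ∃ i, j = i + 1 := ⟨j - 1, by omega⟩
      rw [gf_y c d i hd h, mul_add, A1 i (by omega) (by omega), mul_left_comm,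
        A1 (i + 1) (by omega) (by omega), A2 (i + 1) (by omega) (by omega)]
      simp
    · rcases Nat.lt_or_ge 1 d with h2 | h2
      · obtain ⟨i, rfl⟩ : ∃ i, j = i + 2 := ⟨j - 2, by omega⟩
        rw [gf_x c d i hd (by omega), mul_add, A1 (i + 1) (by omega) (by omega), mul_left_comm,
          A1 i (by omega) (by omega), A2 (i + 1) (by omega) (by omega)]
        simp
      · have h3 : d = 1 := by omega
        have h4 : j = c + 1 := by omega
        subst h3 h4
        rw [gf_succ, gco_symm c 1 (c + 1) c (by omega), sub_self]

theorem gf_rec (c d : ℕ) (hc : 1 ≤ c) (hd : 1 ≤ d) :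
    gf c d c = c * gf (c - 1) d (c - 1) + d * gf c (d - 1) c := by
  obtain ⟨k, rfl⟩ : ∃ k, c = k + 1 := ⟨c - 1, by omega⟩
  rw [gf_y (k + 1) d k hd (by omega), Nat.add_sub_cancel,
    gf_vanish _ k d (k + 1) rfl (by omega) (by omega)]
  ring

end Poly
/-! ### Shapes as finitely supported functions -/

section Shapes

abbrev Shp : Type := ℕ →₀ ℕ

noncomputable def dg (ν : Shp) : ℕ := Finsupp.degree ν

theorem dg_strict : StrictMono dg := by
  intro a b hab
  obtain ⟨c, rfl⟩ := exists_add_of_le hab.le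
  have : dg c ≠ 0 := by
    intro h
    rw [dg, Finsupp.degree_eq_zero_iff] at h
    subst h
    simp at hab
  have h2 : dg (a + c) = dg a + dg c := by simp [dg]
  omega

theorem dg_range (ν : Shp) (n : ℕ) (h : ∀ r, n ≤ r → ν r = 0) :
    dg ν = ∑ r ∈ Finset.range n, ν r := by
  rw [dg, Finsupp.degree_apply]
  refine Finset.sum_subset ?_ ?_
  · intro r hr
    rw [Finset.mem_range]
    by_contra hn
    exact (Finsupp.mem_support_iff.1 hr) (h r (by omega))
  · intro r _ hr
    exact Finsupp.notMem_support_iff.1 hr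

theorem Shp_bound (ν : Shp) : ∃ n, ∀ r, n ≤ r → ν r = 0 := by
  refine ⟨ν.support.sup id + 1, fun r hr => ?_⟩
  by_contra h
  have := Finset.le_sup (f := id) (Finsupp.mem_support_iff.2 h)
  simp at this
  omega

def HS (κ ν : Shp) : Prop := κ ≤ ν ∧ ∀ r, ν (r + 1) ≤ κ r
def AntiT (ν : Shp) : Prop := ∀ r, ν (r + 1) ≤ ν r

noncomputable def hT (ν κ : Shp) : ℚ := if HS κ ν then 1 else 0

theorem hT_self (ν : Shp) (h : AntiT ν) : hT ν ν = 1 := if_pos ⟨le_rfl, h⟩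

theorem AntiT.le {ν : Shp} (h : AntiT ν) {i j : ℕ} (hij : i ≤ j) : ν j ≤ ν i :=
  antitone_nat_of_succ_le h hij

/-- upper bound for the intermediate shape -/
def bkHi (ν σ : Shp) : ℕ → ℕ
  | 0 => ν 0
  | r + 1 => min (ν (r + 1)) (σ r)

noncomputable def bk (ν σ κ : Shp) : Shp :=
  Finsupp.onFinset ν.support
    (fun r => min (ν r) (max (σ r) (ν (r + 1)) + bkHi ν σ r - κ r)) (by
      intro r hr
      rw [Finsupp.mem_support_iff]
      intro h
      rw [h] at hr
      simp at hr)

theorem bk_mid {ν σ κ : Shp} (h1 : HS κ ν) (h2 : HS σ κ) (r : ℕ) :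
    max (σ r) (ν (r + 1)) ≤ κ r ∧ κ r ≤ bkHi ν σ r ∧ bkHi ν σ r ≤ ν r := by
  refine ⟨max_le (h2.1 r) (h1.2 r), ?_, ?_⟩
  · cases r with
    | zero => exact h1.1 0
    | succ r => exact le_min (h1.1 _) (h2.2 r)
  · cases r with
    | zero => exact le_rfl
    | succ r => exact min_le_left _ _

theorem bk_apply {ν σ κ : Shp} (h1 : HS κ ν) (h2 : HS σ κ) (r : ℕ) :
    bk ν σ κ r = max (σ r) (ν (r + 1)) + bkHi ν σ r - κ r := by
  have := bk_mid h1 h2 r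
  simp only [bk, Finsupp.onFinset_apply]
  exact min_eq_right (by omega)

theorem bk_HS {ν σ κ : Shp} (h1 : HS κ ν) (h2 : HS σ κ) :
    HS (bk ν σ κ) ν ∧ HS σ (bk ν σ κ) := by
  have hb : ∀ r, max (σ r) (ν (r + 1)) ≤ bk ν σ κ r ∧ bk ν σ κ r ≤ bkHi ν σ r := by
    intro r
    have := bk_mid h1 h2 r
    rw [bk_apply h1 h2]
    omega
  refine ⟨⟨fun r => (hb r).2.trans (bk_mid h1 h2 r).2.2, fun r => (le_max_right _ _).trans (hb r).1⟩,
    fun r => (le_max_left _ _).trans (hb r).1, fun r => ?_⟩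
  exact (hb (r + 1)).2.trans (min_le_right _ _)

theorem bk_bk {ν σ κ : Shp} (h1 : HS κ ν) (h2 : HS σ κ) : bk ν σ (bk ν σ κ) = κ := by
  ext r
  have := bk_mid h1 h2 r
  rw [bk_apply (bk_HS h1 h2).1 (bk_HS h1 h2).2, bk_apply h1 h2]
  omega

theorem bk_dg {ν σ κ : Shp} (h1 : HS κ ν) (h2 : HS σ κ) :
    dg (bk ν σ κ) + dg κ = dg ν + dg σ := by
  obtain ⟨n, hn⟩ := Shp_bound ν
  have hk : ∀ r, n ≤ r → κ r = 0 := fun r hr => by have := h1.1 r; have := hn r hr; omega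
  have hs : ∀ r, n ≤ r → σ r = 0 := fun r hr => by have := h2.1 r; have := hk r hr; omega
  have hb : ∀ r, n ≤ r → bk ν σ κ r = 0 := fun r hr => by
    have := (bk_HS h1 h2).1.1 r; have := hn r hr; omega
  have up : ∀ τ : Shp, (∀ r, n ≤ r → τ r = 0) → dg τ = ∑ r ∈ Finset.range (n + 1), τ r :=
    fun τ h => dg_range τ (n + 1) fun r hr => h r (by omega)
  have e1 : dg (bk ν σ κ) + dg κ =
      ∑ r ∈ Finset.range (n + 1), (max (σ r) (ν (r + 1)) + bkHi ν σ r) := by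
    rw [up _ hb, up _ hk, ← Finset.sum_add_distrib]
    refine Finset.sum_congr rfl fun r _ => ?_
    have := bk_mid h1 h2 r
    rw [bk_apply h1 h2]
    omega
  rw [e1, Finset.sum_add_distrib, Finset.sum_range_succ, Finset.sum_range_succ' (bkHi ν σ)]
  rw [hs n le_rfl, hn (n + 1) (by omega)]
  simp only [bkHi]
  have e2 : ∑ r ∈ Finset.range n, max (σ r) (ν (r + 1)) +
    ∑ r ∈ Finset.range n, min (ν (r + 1)) (σ r) =
    ∑ r ∈ Finset.range n, ν (r + 1) + ∑ r ∈ Finset.range n, σ r := by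
    rw [← Finset.sum_add_distrib, ← Finset.sum_add_distrib]
    refine Finset.sum_congr rfl fun r _ => ?_
    omega
  rw [dg_range σ n hs, up ν hn, Finset.sum_range_succ']
  simp only [max_self]
  omega

theorem hT_swap (s ρ : Shp) (a b : ℕ) (_ : ρ ≤ s) :
      (∑ κ ∈ Finset.Iic s,
      if ρ ≤ κ ∧ dg s = dg κ + a ∧ dg κ = dg ρ + b then hT s κ * hT κ ρ else 0) =
      (∑ κ ∈ Finset.Iic s,
      if ρ ≤ κ ∧ dg s = dg κ + b ∧ dg κ = dg ρ + a then hT s κ * hT κ ρ else 0) := by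
  have key : ∀ a b, (∑ κ ∈ Finset.Iic s,
      if ρ ≤ κ ∧ dg s = dg κ + a ∧ dg κ = dg ρ + b then hT s κ * hT κ ρ else 0) =
      ((((Finset.Iic s).filter (fun κ => (dg s = dg κ + a ∧ dg κ = dg ρ + b) ∧ HS κ s ∧ HS ρ κ)).card
        : ℕ) : ℚ) := by
    intro a b
    rw [Finset.card_filter]
    push_cast
    refine Finset.sum_congr rfl fun κ _ => ?_
    by_cases h1 : HS κ s <;> by_cases h2 : HS ρ κ <;> simp [hT, h1, h2]
    simp [h2.1]
  rw [key, key]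
  congr 1
  refine Finset.card_nbij' (bk s ρ) (bk s ρ) ?_ ?_ ?_ ?_
  · intro κ hκ
    simp only [Finset.coe_filter, Finset.mem_Iic, Set.mem_ofPred_eq] at hκ ⊢
    obtain ⟨h1, ⟨h2, h3⟩, h4, h5⟩ := hκ
    have := bk_dg h4 h5
    exact ⟨(bk_HS h4 h5).1.1, ⟨by omega, by omega⟩, bk_HS h4 h5⟩
  · intro κ hκ
    simp only [Finset.coe_filter, Finset.mem_Iic, Set.mem_ofPred_eq] at hκ ⊢
    obtain ⟨h1, ⟨h2, h3⟩, h4, h5⟩ := hκ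
    have := bk_dg h4 h5
    exact ⟨(bk_HS h4 h5).1.1, ⟨by omega, by omega⟩, bk_HS h4 h5⟩
  · intro κ hκ
    simp only [Finset.coe_filter, Finset.mem_Iic, Set.mem_ofPred_eq] at hκ
    exact bk_bk hκ.2.2.1 hκ.2.2.2
  · intro κ hκ
    simp only [Finset.coe_filter, Finset.mem_Iic, Set.mem_ofPred_eq] at hκ
    exact bk_bk hκ.2.2.1 hκ.2.2.2

/-! vertical strips -/

def VS (ρ ν : Shp) : Prop := ρ ≤ ν ∧ (∀ r, ν r ≤ ρ r + 1) ∧ AntiT ρ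

noncomputable def vT (ν ρ : Shp) : ℚ := if VS ρ ν then 1 else 0

theorem vT_self (ν : Shp) (h : AntiT ν) : vT ν ν = 1 := if_pos ⟨le_rfl, fun _ => by omega, h⟩

theorem dg_update (κ : Shp) (r b : ℕ) : dg (κ.update r b) + κ r = dg κ + b := by
  obtain ⟨n, hn⟩ := Shp_bound κ
  rw [dg_range κ (n + r + 1) fun i hi => hn i (by omega),
    dg_range (κ.update r b) (n + r + 1) fun i hi => by
      rw [Finsupp.coe_update, Function.update_of_ne (by omega)]; exact hn i (by omega)]
  have hr : r ∈ Finset.range (n + r + 1) := by simp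
  rw [← Finset.add_sum_erase _ _ hr, ← Finset.add_sum_erase _ (fun i => κ i) hr]
  have : ∑ x ∈ (Finset.range (n + r + 1)).erase r, (κ.update r b) x =
    ∑ x ∈ (Finset.range (n + r + 1)).erase r, κ x := by
    refine Finset.sum_congr rfl fun i hi => ?_
    rw [Finsupp.coe_update, Function.update_of_ne (Finset.ne_of_mem_erase hi)]
  rw [this, Finsupp.coe_update, Function.update_self]
  ring

theorem VS_toggle {ν ρ κ : Shp} (hν : AntiT ν) (h1 : VS κ ν) (h2 : HS ρ κ) (r : ℕ)
    (hr : ρ r < ν r) (hlt : ∀ i < r, ρ i = ν i) :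
    VS (κ.update r (2 * ν r - 1 - κ r)) ν ∧ HS ρ (κ.update r (2 * ν r - 1 - κ r)) := by
  have a1 := h1.1 r
  have a2 := h1.2.1 r
  have a3 := h2.1 r
  have a4 := h2.2 r
  have hS : HS ρ (κ.update r (2 * ν r - 1 - κ r)) := by
    constructor
    · intro i
      rw [Finsupp.coe_update]
      by_cases hi : i = r
      · subst hi
        rw [Function.update_self]; omega
      · rw [Function.update_of_ne hi]; exact h2.1 i
    · intro i
      rw [Finsupp.coe_update]
      by_cases hi : i + 1 = r
      · subst hi
        rw [Function.update_self, hlt i (by omega)]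
        have := hν i
        omega
      · rw [Function.update_of_ne hi]; exact h2.2 i
  refine ⟨⟨?_, ?_, ?_⟩, hS⟩
  · intro i
    rw [Finsupp.coe_update]
    by_cases hi : i = r
    · subst hi
      rw [Function.update_self]; omega
    · rw [Function.update_of_ne hi]; exact h1.1 i
  · intro i
    rw [Finsupp.coe_update]
    by_cases hi : i = r
    · subst hi
      rw [Function.update_self]; omega
    · rw [Function.update_of_ne hi]; exact h1.2.1 i
  · intro i
    exact (hS.2 i).trans (hS.1 i)

theorem vT_hv (ν ρ : Shp) (hν : AntiT ν) (hρ : ρ < ν) :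
    vT ν ρ = ∑ κ ∈ Finset.Iic ν, if ρ < κ then
        (-1) ^ (dg κ + dg ρ + 1) * vT ν κ * hT κ ρ else 0 := by
  obtain ⟨r, hr, hlt⟩ : ∃ r, ρ r < ν r ∧ ∀ i < r, ρ i = ν i := by
    have hex : ∃ r, ρ r ≠ ν r := by
      by_contra hn
      push Not at hn
      exact hρ.ne (Finsupp.ext hn)
    refine ⟨Nat.find hex, lt_of_le_of_ne (hρ.le _) (Nat.find_spec hex), fun i hi => ?_⟩
    have := Nat.find_min hex hi
    push Not at this
    exact this
  have key : ∑ κ ∈ (Finset.Iic ν).filter (fun κ => VS κ ν ∧ HS ρ κ), (-1 : ℚ) ^ (dg κ + dg ρ + 1) = 0 := by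
    have tog : ∀ κ : Shp, VS κ ν → HS ρ κ → κ r ≤ ν r ∧ ν r ≤ κ r + 1 ∧ ρ r ≤ κ r :=
      fun κ h1 h2 => ⟨h1.1 r, h1.2.1 r, h2.1 r⟩
    refine Finset.sum_involution (fun κ _ => κ.update r (2 * ν r - 1 - κ r)) ?_ ?_ ?_ ?_
    · intro κ hκ
      simp only [Finset.mem_filter, Finset.mem_Iic] at hκ
      have h := dg_update κ r (2 * ν r - 1 - κ r)
      have := tog κ hκ.2.1 hκ.2.2
      have : dg (κ.update r (2 * ν r - 1 - κ r)) = dg κ + 1 ∨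
        dg κ = dg (κ.update r (2 * ν r - 1 - κ r)) + 1 := by omega
      rcases this with h | h <;> rw [h] <;> ring
    · intro κ hκ _ he
      simp only [Finset.mem_filter, Finset.mem_Iic] at hκ
      have := tog κ hκ.2.1 hκ.2.2
      have h3 := DFunLike.congr_fun he r
      rw [Finsupp.coe_update, Function.update_self] at h3
      omega
    · intro κ hκ
      simp only [Finset.mem_filter, Finset.mem_Iic] at hκ ⊢
      have := VS_toggle hν hκ.2.1 hκ.2.2 r hr hlt
      exact ⟨this.1.1, this⟩
    · intro κ hκ
      simp only [Finset.mem_filter, Finset.mem_Iic] at hκ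
      have := tog κ hκ.2.1 hκ.2.2
      ext i
      simp only [Finsupp.coe_update, Function.update_self, Function.update_idem]
      by_cases hi : i = r
      · subst hi
        rw [Function.update_self]; omega
      · rw [Function.update_of_ne hi]
  rw [Finset.sum_filter] at key
  have hmem : ρ ∈ Finset.Iic ν := Finset.mem_Iic.2 hρ.le
  rw [← Finset.add_sum_erase _ _ hmem] at key ⊢
  rw [if_neg (lt_irrefl _), zero_add]
  have e1 : (if VS ρ ν ∧ HS ρ ρ then (-1 : ℚ) ^ (dg ρ + dg ρ + 1) else 0) = - vT ν ρ := by
    rw [vT]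
    by_cases h : VS ρ ν
    · rw [if_pos ⟨h, le_rfl, h.2.2⟩, if_pos h, ← two_mul, pow_succ, pow_mul]; simp
    · rw [if_neg (fun h' => h h'.1), if_neg h]; simp
  rw [e1] at key
  have e2 : ∑ x ∈ (Finset.Iic ν).erase ρ, (if VS x ν ∧ HS ρ x then (-1 : ℚ) ^ (dg x + dg ρ + 1) else 0) =
    ∑ κ ∈ (Finset.Iic ν).erase ρ, if ρ < κ then
        (-1) ^ (dg κ + dg ρ + 1) * vT ν κ * hT κ ρ else 0 := by
    refine Finset.sum_congr rfl fun κ hκ => ?_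
    have hne := Finset.ne_of_mem_erase hκ
    by_cases h1 : VS κ ν <;> by_cases h2 : HS ρ κ <;> simp [vT, hT, h1, h2]
    exact lt_of_le_of_ne h2.1 hne.symm
  rw [← e2]
  linarith

end Shapes
section Value

noncomputable def KT (w : List ℕ) (ν : Shp) : ℚ := KG dg hT w ν

theorem EE_KT (k : ℕ) (s : Shp) (hs : AntiT s) (w : List ℕ) : EE (fun w => KT w s) k w =
      ∑ ρ ∈ Finset.Iic s, if dg s = dg ρ + k then vT s ρ * KT w ρ else 0 :=
  EE_KG dg hT vT AntiT dg_strict vT_self (fun s ρ h1 h2 => by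
    have := vT_hv s ρ h1 h2
    convert this) k s hs w

noncomputable def col (a : ℕ) : Shp :=
  Finsupp.onFinset (Finset.range a) (fun r => if r < a then 1 else 0) (by
    intro r hr
    rw [Finset.mem_range]
    by_contra h
    simp [h] at hr)

theorem col_apply (a r : ℕ) : col a r = if r < a then 1 else 0 := rfl

theorem dg_col (a : ℕ) : dg (col a) = a := by
  rw [dg_range (col a) a (fun r hr => by rw [col_apply, if_neg (by omega)])]
  rw [Finset.sum_congr rfl (g := fun _ => 1) (fun r hr => by
    rw [col_apply, if_pos (Finset.mem_range.1 hr)])]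
  simp

theorem col_anti (a : ℕ) : AntiT (col a) := by
  intro r
  rw [col_apply, col_apply]
  split_ifs <;> omega

theorem eq_col (ρ : Shp) (h1 : ∀ r, ρ r ≤ 1) (h2 : AntiT ρ) : ρ = col (dg ρ) := by
  have hex : ∃ n, ρ n = 0 := by
    obtain ⟨n, hn⟩ := Shp_bound ρ
    exact ⟨n, hn n le_rfl⟩
  have : ρ = col (Nat.find hex) := by
    ext r
    rw [col_apply]
    split_ifs with h
    · have := Nat.find_min hex h
      have := h1 r
      omega
    · have := h2.le (Nat.le_of_not_lt h)
      have := Nat.find_spec hex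
      omega
  have h3 : dg ρ = Nat.find hex := by
    exact (congrArg dg this).trans (dg_col _)
  rw [h3]; exact this

theorem EE_KT_nil (a : ℕ) (ρ : Shp) (hρ : AntiT ρ) (hd : dg ρ = a) :
    EE (fun w => KT w ρ) a [] = if ρ = col a then 1 else 0 := by
  rw [EE_KT a ρ hρ, Finset.sum_eq_single_of_mem 0 (by simp)]
  · have h0 : dg (0 : Shp) = 0 := by simp [dg]
    rw [if_pos (by omega), KT, KG, if_pos h0, mul_one, vT]
    congr 1
    apply propext
    constructor
    · intro h
      rw [← hd]
      exact eq_col ρ (fun r => by simpa using h.2.1 r) hρ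
    · rintro rfl
      refine ⟨zero_le, fun r => ?_, fun r => by simp⟩
      rw [col_apply]; split_ifs <;> simp
  · intro τ _ hτ
    rw [if_neg]
    intro h
    apply hτ
    have : dg τ = 0 := by omega
    rwa [dg, Finsupp.degree_eq_zero_iff] at this

theorem EE_EE_KT (a b : ℕ) (ν : Shp) (hν : AntiT ν) (hd : dg ν = a + b) :
    EE (EE (fun w => KT w ν) b) a [] = if VS (col a) ν then 1 else 0 := by
  have h1 : EE (fun w => KT w ν) b = fun w => ∑ ρ ∈ Finset.Iic ν,
      (if dg ν = dg ρ + b then vT ν ρ else 0) * KT w ρ := by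
    funext w
    rw [EE_KT b ν hν]
    refine Finset.sum_congr rfl fun ρ _ => ?_
    split_ifs <;> simp
  rw [h1, EE_sum]
  have h2 : ∀ ρ ∈ Finset.Iic ν, (if dg ν = dg ρ + b then vT ν ρ else 0) * EE (fun w => KT w ρ) a [] =
      if ρ = col a then (if VS (col a) ν then 1 else 0) else 0 := by
    intro ρ _
    by_cases h3 : VS ρ ν
    · by_cases h4 : dg ν = dg ρ + b
      · rw [if_pos h4, EE_KT_nil a ρ h3.2.2 (by omega)]
        by_cases h5 : ρ = col a
        · subst h5
          rw [if_pos rfl, if_pos rfl, mul_one, vT]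
        · rw [if_neg h5, if_neg h5, mul_zero]
      · rw [if_neg h4, zero_mul, if_neg]
        rintro rfl
        rw [dg_col] at h4
        omega
    · have : vT ν ρ = 0 := if_neg h3
      rw [this, ite_self, zero_mul]
      split_ifs with h5 h6
      · subst h5; exact absurd h6 h3
      · rfl
      · rfl
  rw [Finset.sum_congr rfl h2, Finset.sum_ite_eq']
  by_cases h : VS (col a) ν
  · rw [if_pos (Finset.mem_Iic.2 h.1)]
  · rw [if_neg h, ite_self]

noncomputable def Psi (C D : ℕ) (F : List ℕ → ℚ) : ℚ :=
  EE (EE F C) (C + D) [] - if C = 0 then 0 else EE (EE F (C - 1)) (C + D + 1) []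

theorem Psi_sum {ι : Type*} (C D : ℕ) (s : Finset ι) (c : ι → ℚ) (F : ι → List ℕ → ℚ) :
    Psi C D (fun w => ∑ i ∈ s, c i * F i w) = ∑ i ∈ s, c i * Psi C D (F i) := by
  have h : ∀ a b, EE (EE (fun w => ∑ i ∈ s, c i * F i w) b) a [] =
      ∑ i ∈ s, c i * EE (EE (F i) b) a [] := by
    intro a b
    have : EE (fun w => ∑ i ∈ s, c i * F i w) b = fun w => ∑ i ∈ s, c i * EE (F i) b w :=
      funext (EE_sum s c F b)
    rw [this, EE_sum]
  unfold Psi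
  rw [h, h]
  split_ifs
  · simp
  · rw [← Finset.sum_sub_distrib]
    refine Finset.sum_congr rfl fun i _ => by ring

theorem Psi_KT (C D : ℕ) (ν : Shp) (hν : AntiT ν) (hd : dg ν = 2 * C + D) :
    Psi C D (fun w => KT w ν) = if ν = col (C + D) + col C then 1 else 0 := by
  rw [Psi, EE_EE_KT (C + D) C ν hν (by omega)]
  have hT1 : ν = col (C + D) + col C → VS (col (C + D)) ν ∧ ¬ VS (col (C + D + 1)) ν := by
    rintro rfl
    refine ⟨⟨fun r => by simp, fun r => ?_, col_anti _⟩, fun h => ?_⟩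
    · rw [Finsupp.add_apply, col_apply, col_apply]; split_ifs <;> omega
    · have := h.1 (C + D)
      rw [Finsupp.add_apply, col_apply, col_apply, col_apply] at this
      simp at this
  have hT2 : ∀ (_ : VS (col (C + D)) ν) (_ : C = 0 ∨ ν (C + D) = 0), ν = col (C + D) + col C := by
    intro h h0
    obtain ⟨τ, hτ⟩ := exists_add_of_le h.1
    have hdτ : dg τ = C := by
      have : dg ν = dg (col (C + D)) + dg τ := by rw [hτ]; simp [dg]
      rw [dg_col] at this
      omega
    have : τ = col C := by
      rcases h0 with h0 | h0
      · subst h0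
        have h1 : τ = 0 := by rwa [dg, Finsupp.degree_eq_zero_iff] at hdτ
        rw [h1]; ext r; rw [col_apply]; simp
      · have hv : ∀ r, ν r = col (C + D) r + τ r := fun r => by rw [hτ]; rfl
        rw [← hdτ]
        apply eq_col
        · intro r
          have := h.2.1 r
          have := hv r
          omega
        · intro r
          have h1 := hv r
          have h2 := hv (r + 1)
          have h3 := hν r
          rw [col_apply] at h1 h2
          by_cases h4 : r + 1 < C + D
          · rw [if_pos h4] at h2
            rw [if_pos (by omega)] at h1
            omega
          · have := hν.le (Nat.le_of_not_lt h4)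
            omega
    rw [← this]; exact hτ
  rcases Nat.eq_zero_or_pos C with hC | hC
  · rw [if_pos hC, sub_zero]
    congr 1
    exact propext ⟨fun h => hT2 h (Or.inl hC), fun h => (hT1 h).1⟩
  · rw [if_neg (show ¬ C = 0 by omega), EE_EE_KT (C + D + 1) (C - 1) ν hν (by omega)]
    by_cases h : ν = col (C + D) + col C
    · rw [if_pos (hT1 h).1, if_neg (hT1 h).2, if_pos h, sub_zero]
    · rw [if_neg h]
      have : VS (col (C + D)) ν ↔ VS (col (C + D + 1)) ν := by
        constructor
        · intro h1
          have h2 : ν (C + D) ≠ 0 := fun h2 => h (hT2 h1 (Or.inr h2))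
          refine ⟨fun r => ?_, fun r => ?_, col_anti _⟩
          · have := h1.1 r
            rw [col_apply] at this ⊢
            by_cases hr : r = C + D
            · subst hr; split_ifs <;> omega
            · split_ifs at this ⊢ <;> omega
          · have := h1.2.1 r
            rw [col_apply] at this ⊢
            split_ifs at this ⊢ <;> omega
        · intro h1
          have h2 : ν (C + D) ≤ 1 := by
            by_contra h2
            have : ∑ r ∈ Finset.range (C + D + 1), 2 ≤ ∑ r ∈ Finset.range (C + D + 1), ν r := by
              refine Finset.sum_le_sum fun r hr => ?_
              have := hν.le (Nat.le_of_lt_succ (Finset.mem_range.1 hr))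
              omega
            obtain ⟨n, hn⟩ := Shp_bound ν
            have h3 := dg_range ν (n + (C + D + 1)) (fun r hr => hn r (by omega))
            have h4 : ∑ r ∈ Finset.range (C + D + 1), ν r ≤
              ∑ r ∈ Finset.range (n + (C + D + 1)), ν r :=
              Finset.sum_le_sum_of_subset (Finset.range_mono (by omega))
            simp at this
            omega
          refine ⟨fun r => ?_, fun r => ?_, col_anti _⟩
          · have := h1.1 r
            rw [col_apply] at this ⊢
            split_ifs at this ⊢ <;> omega
          · have := h1.2.1 r
            rw [col_apply] at this ⊢
            by_cases hr : r = C + D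
            · subst hr; split_ifs <;> omega
            · split_ifs at this ⊢ <;> omega
      by_cases h1 : VS (col (C + D)) ν
      · rw [if_pos h1, if_pos (this.1 h1), sub_self]
      · rw [if_neg h1, if_neg (fun h2 => h1 (this.2 h2)), sub_self]

theorem Psi_net (C D : ℕ) :
    Psi C D (fun w => KG Finset.card (hX (genNet (C + D) C)) w Finset.univ) = gf C D C := by
  rw [Psi, EE_net C D (C + D) C (by omega)]
  cases C with
  | zero =>
    rw [if_pos rfl, sub_zero, gf_zero]; rfl
  | succ k =>
    rw [if_neg (by omega), EE_net (k + 1) D (k + 1 + D + 1) (k + 1 - 1) (by omega), gf_succ]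
    rfl

end Value
section Tableaux

noncomputable def diagF (ν : Shp) : Finset Cell :=
  (ν.support.sigma fun r => Finset.range (ν r)).map (Equiv.sigmaEquivProd ℕ ℕ).toEmbedding

theorem mem_diagF (ν : Shp) (r j : ℕ) : ((r, j) : Cell) ∈ diagF ν ↔ j < ν r := by
  simp only [diagF, Finset.mem_map, Finset.mem_sigma, Finsupp.mem_support_iff, Finset.mem_range]
  constructor
  · rintro ⟨⟨a, b⟩, ⟨_, h⟩, he⟩
    simp at he
    obtain ⟨rfl, rfl⟩ := he
    exact h
  · intro h
    exact ⟨⟨r, j⟩, ⟨by dsimp; omega, h⟩, rfl⟩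

theorem card_diagF (ν : Shp) : (diagF ν).card = dg ν := by
  rw [diagF, Finset.card_map, Finset.card_sigma, dg, Finsupp.degree_apply]
  simp

theorem diagF_le (κ ν : Shp) : diagF κ ≤ diagF ν ↔ κ ≤ ν := by
  constructor
  · intro h r
    by_contra hn
    push Not at hn
    have := h ((mem_diagF κ r (ν r)).2 hn)
    rw [mem_diagF] at this
    omega
  · rintro h ⟨r, j⟩ hx
    rw [mem_diagF] at hx ⊢
    exact lt_of_lt_of_le hx (h r)

theorem diagF_inj : Function.Injective diagF := by
  intro a b h
  exact le_antisymm ((diagF_le a b).1 h.le) ((diagF_le b a).1 h.ge)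

def RowClosed (A : Finset Cell) : Prop := ∀ r j, ((r, j + 1) : Cell) ∈ A → ((r, j) : Cell) ∈ A

def RT (A B : Finset Cell) : Prop := RowClosed A ∧ RowClosed B ∧ A ⊆ B ∧
  ∀ r j, ((r + 1, j) : Cell) ∈ B → ((r, j) : Cell) ∈ A

theorem RowClosed.exists {A : Finset Cell} (h : RowClosed A) : ∃ κ, A = diagF κ := by
  have hle : ∀ r j i, i ≤ j → ((r, j) : Cell) ∈ A → ((r, i) : Cell) ∈ A := by
    intro r j i hij hj
    induction j with
    | zero => have : i = 0 := by omega
              subst this; exact hj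
    | succ j ih =>
      rcases Nat.lt_or_ge i (j + 1) with h1 | h1
      · exact ih (by omega) (h r j hj)
      · have : i = j + 1 := by omega
        subst this; exact hj
  have hex : ∀ r, ∃ j, ((r, j) : Cell) ∉ A := by
    intro r
    refine ⟨A.sup Prod.snd + 1, fun hm => ?_⟩
    have := Finset.le_sup (f := Prod.snd) hm
    dsimp only at this
    omega
  refine ⟨Finsupp.onFinset (A.image Prod.fst) (fun r => Nat.find (hex r)) ?_, ?_⟩
  · intro r hr
    have := Nat.find_min (hex r) (Nat.pos_of_ne_zero hr)
    push Not at this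
    exact Finset.mem_image.2 ⟨_, this, rfl⟩
  · ext ⟨r, j⟩
    rw [mem_diagF, Finsupp.onFinset_apply]
    constructor
    · intro hj
      by_contra hn
      exact Nat.find_spec (hex r) (hle r j _ (Nat.le_of_not_lt hn) hj)
    · intro hj
      have := Nat.find_min (hex r) hj
      push Not at this
      exact this

theorem RowClosed_diagF (ν : Shp) : RowClosed (diagF ν) := by
  intro r j h
  rw [mem_diagF] at h ⊢
  omega

theorem RT_diagF (κ ν : Shp) : RT (diagF κ) (diagF ν) ↔ HS κ ν := by
  constructor
  · rintro ⟨_, _, h1, h2⟩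
    refine ⟨(diagF_le _ _).1 h1, fun r => ?_⟩
    by_contra hn
    push Not at hn
    have := h2 r (κ r) ((mem_diagF _ _ _).2 hn)
    rw [mem_diagF] at this
    omega
  · rintro ⟨h1, h2⟩
    refine ⟨RowClosed_diagF _, RowClosed_diagF _, (diagF_le _ _).2 h1, fun r j hj => ?_⟩
    rw [mem_diagF] at hj ⊢
    exact lt_of_lt_of_le hj (h2 r)

theorem KG_diag : ∀ (w : List ℕ) (ν : Shp),
    KG Finset.card (fun U U' : Finset Cell => if RT U' U then (1 : ℚ) else 0) w (diagF ν) = KT w ν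
  | [], ν => by simp only [KT, KG, card_diagF]
  | a :: w, ν => by
    simp only [KT, KG]
    have h1 : ∑ κ ∈ Finset.Iic ν, (if dg ν = dg κ + a then hT ν κ * KG dg hT w κ else 0) =
      ∑ A ∈ (Finset.Iic ν).image diagF, if (diagF ν).card = A.card + a then
        (if RT A (diagF ν) then (1 : ℚ) else 0) *
          KG Finset.card (fun U U' : Finset Cell => if RT U' U then (1 : ℚ) else 0) w A else 0 := by
      rw [Finset.sum_image (fun x _ y _ h => diagF_inj h)]
      refine Finset.sum_congr rfl fun κ _ => ?_
      rw [KG_diag w κ, card_diagF, card_diagF, hT, KT]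
      have : (RT (diagF κ) (diagF ν)) = HS κ ν := propext (RT_diagF κ ν)
      simp only [this]
    rw [h1]
    symm
    refine Finset.sum_subset ?_ ?_
    · intro A hA
      obtain ⟨κ, hκ, rfl⟩ := Finset.mem_image.1 hA
      rw [Finset.mem_Iic] at hκ ⊢
      exact (diagF_le _ _).2 hκ
    · intro A hA hn
      rw [if_neg (c := RT A (diagF ν)), zero_mul, ite_self]
      rintro ⟨h2, _, h3, _⟩
      obtain ⟨κ, rfl⟩ := h2.exists
      exact hn (Finset.mem_image.2 ⟨κ, Finset.mem_Iic.2 ((diagF_le _ _).1 h3), rfl⟩)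

noncomputable def rowsF {N : ℕ} (lam : Nat.Partition N) : Shp :=
  ((lam.parts.sort (· ≤ ·)).reverse).toFinsupp

theorem rowsF_apply {N : ℕ} (lam : Nat.Partition N) (r : ℕ) : rowsF lam r = rowLen lam r := rfl

noncomputable def plist {N : ℕ} (lam : Nat.Partition N) : List ℕ := (lam.parts.sort (· ≤ ·)).reverse

theorem plist_pw {N : ℕ} (lam : Nat.Partition N) : (plist lam).Pairwise (· ≥ ·) := by
  rw [plist, List.pairwise_reverse]
  exact Multiset.pairwise_sort _ _

theorem plist_coe {N : ℕ} (lam : Nat.Partition N) : (plist lam : Multiset ℕ) = lam.parts := by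
  rw [plist, Multiset.coe_reverse, Multiset.sort_eq]

theorem rowsF_eq {N : ℕ} (lam : Nat.Partition N) (r : ℕ) : rowsF lam r = (plist lam).getD r 0 := rfl

theorem rowsF_anti {N : ℕ} (lam : Nat.Partition N) : AntiT (rowsF lam) := by
  intro r
  rw [rowsF_eq, rowsF_eq]
  by_cases h : r + 1 < (plist lam).length
  · rw [List.getD_eq_getElem _ _ h, List.getD_eq_getElem _ _ (by omega)]
    exact List.pairwise_iff_getElem.1 (plist_pw lam) r (r + 1) (by omega) h (by omega)
  · rw [List.getD_eq_default _ _ (by omega)]; omega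

theorem dg_toFinsupp (l : List ℕ) (ν : Shp) (h : ∀ r, ν r = l.getD r 0) : dg ν = l.sum := by
  rw [dg_range ν l.length (fun r hr => by rw [h, List.getD_eq_default _ _ hr])]
  rw [← Fin.sum_univ_getElem l, Finset.sum_range]
  refine Finset.sum_congr rfl fun i _ => ?_
  rw [h, List.getD_eq_getElem _ _ i.2]

theorem dg_rowsF {N : ℕ} (lam : Nat.Partition N) : dg (rowsF lam) = N := by
  rw [dg_toFinsupp (plist lam) _ (rowsF_eq lam), ← Multiset.sum_coe, plist_coe, lam.parts_sum]

theorem rowsF_inj {N : ℕ} : Function.Injective (rowsF : Nat.Partition N → Shp) := by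
  intro l m hlm
  have hp : ∀ (k : Nat.Partition N) r, r < (plist k).length ↔ rowsF k r ≠ 0 := by
    intro k r
    rw [rowsF_eq]
    constructor
    · intro h
      rw [List.getD_eq_getElem _ _ h]
      have : (plist k)[r] ∈ (plist k : Multiset ℕ) := List.getElem_mem h
      rw [plist_coe] at this
      exact (k.parts_pos this).ne'
    · intro h
      by_contra hn
      exact h (List.getD_eq_default _ _ (by omega))
  have hl : (plist l).length = (plist m).length := by
    have h1 := hp l (plist l).length
    have h2 := hp m (plist l).length
    have h3 := hp l (plist m).length
    have h4 := hp m (plist m).length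
    rw [hlm] at h1 h3
    have h5 : ¬ (plist l).length < (plist m).length := fun h => by
      have := h1.2 (h2.1 h); omega
    have h6 : ¬ (plist m).length < (plist l).length := fun h => by
      have := h4.2 (h3.1 h); omega
    omega
  have he : plist l = plist m := by
    refine List.ext_getElem hl fun i h1 h2 => ?_
    have := DFunLike.congr_fun hlm i
    rwa [rowsF_eq, rowsF_eq, List.getD_eq_getElem _ _ h1, List.getD_eq_getElem _ _ h2] at this
  apply Nat.Partition.ext
  rw [← plist_coe, ← plist_coe, he]

theorem rowsF_twoOne (C D : ℕ) : rowsF (twoOne C D) = col (C + D) + col C := by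
  have h : plist (twoOne C D) = List.replicate C 2 ++ List.replicate D 1 := by
    refine List.Perm.eq_of_pairwise (le := (· ≥ ·)) ?_ (plist_pw _) ?_ ?_
    · intro a b _ _ h1 h2; omega
    · rw [List.pairwise_append]
      refine ⟨?_, ?_, ?_⟩
      · simp [List.pairwise_replicate]
      · simp [List.pairwise_replicate]
      · intro a ha b hb
        rw [List.eq_of_mem_replicate ha, List.eq_of_mem_replicate hb]; omega
    · rw [← Multiset.coe_eq_coe, plist_coe]
      rfl
  ext r
  rw [rowsF_eq, h, Finsupp.add_apply, col_apply, col_apply]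
  simp only [List.getD_eq_getElem?_getD, List.getElem?_append, List.length_replicate,
    List.getElem?_replicate]
  split_ifs <;> simp <;> omega

theorem mem_diag {N : ℕ} (lam : Nat.Partition N) (c : Cell) :
    c ∈ diag lam ↔ c ∈ diagF (rowsF lam) := by
  obtain ⟨r, j⟩ := c
  rw [mem_diagF, rowsF_apply]
  rfl

theorem card_diag_eq {N : ℕ} (lam : Nat.Partition N) (t : Cell → ℕ) (i : ℕ) :
    Nat.card {c : Cell // c ∈ diag lam ∧ t c = i} =
      ((diagF (rowsF lam)).filter (fun x => t x = i)).card := by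
  rw [← Nat.subtype_card]
  intro x
  rw [Finset.mem_filter, mem_diag]

theorem schurFn_eq {N : ℕ} (lam : Nat.Partition N) (w : List ℕ) :
    schurFn lam (wt w) = KT w (rowsF lam) := by
  have h1 := Fill_card RT w (diagF (rowsF lam))
  have h2 : _ = KT w (rowsF lam) := h1.trans (by convert KG_diag w (rowsF lam))
  rw [← h2, schurFn]
  congr 1
  have h3 : {t : Cell → ℕ | IsSSYT lam t ∧
      ∀ i, Nat.card {c : Cell // c ∈ diag lam ∧ t c = i} = wt w i}
      = Fill RT (diagF (rowsF lam)) w := by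
    ext t
    constructor
    · rintro ⟨⟨ha, hb, hc, hd⟩, hw⟩
      simp only [mem_diag] at ha hb hc hd
      have hrc : ∀ k, RowClosed (lev (diagF (rowsF lam)) t k) := by
        intro k r j h
        rw [lev, Finset.mem_filter] at h ⊢
        have := hc r j h.1
        exact ⟨RowClosed_diagF _ r j h.1, by omega⟩
      refine ⟨fun x => ?_, fun i _ => by rw [← card_diag_eq, hw], fun k _ => ⟨hrc _, hrc _, ?_, ?_⟩⟩
      · constructor
        · intro h
          by_contra hn
          have := ha x hn
          omega
        · exact hb x
      · intro x hx
        rw [lev, Finset.mem_filter] at hx ⊢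
        exact ⟨hx.1, by omega⟩
      · intro r j h
        rw [lev, Finset.mem_filter] at h ⊢
        have h5 := hd r j h.1
        refine ⟨?_, by omega⟩
        by_contra hn
        have h6 := h.1
        rw [mem_diagF, rowsF_apply] at hn h6
        exact hn (lt_of_lt_of_le h6 (rowsF_anti lam r))
    · intro hf
      have hp : ∀ x ∈ diagF (rowsF lam), 0 < t x := fun x hx => (hf.1 x).2 hx
      refine ⟨⟨?_, ?_, ?_, ?_⟩, ?_⟩
      · intro x hx
        rw [mem_diag, ← hf.1] at hx
        omega
      · intro x hx
        rw [mem_diag] at hx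
        exact hp x hx
      · intro r j h
        rw [mem_diag] at h
        have h4 := Fill_le hf (r, j + 1)
        have h5 := hp _ h
        have h6 := (hf.2.2 (t (r, j + 1) - 1) (by omega)).2.1 r j
        rw [Nat.sub_add_cancel h5, lev, Finset.mem_filter, Finset.mem_filter] at h6
        exact (h6 ⟨h, le_rfl⟩).2
      · intro r j h
        rw [mem_diag] at h
        have h4 := Fill_le hf (r + 1, j)
        have h5 := hp _ h
        have h6 := (hf.2.2 (t (r + 1, j) - 1) (by omega)).2.2.2 r j
        rw [Nat.sub_add_cancel h5, lev, lev, Finset.mem_filter, Finset.mem_filter] at h6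
        have := (h6 ⟨h, le_rfl⟩).2
        omega
      · intro i
        rw [card_diag_eq]
        rcases Nat.eq_zero_or_pos i with rfl | hi
        · rw [wt_zero, Finset.card_eq_zero]
          apply Finset.filter_false_of_mem
          intro x hx hx0
          have := hp x hx
          omega
        · exact hf.2.1 i hi
  rw [← Set.ncard_eq_toFinset_card _ (Fill_finite _ _ _), ← h3]
  rfl

theorem schurFn_supp {N : ℕ} (lam : Nat.Partition N) (μ : ℕ → ℕ) (h : schurFn lam μ ≠ 0) :
    ∃ w, μ = wt w := by
  have : Nonempty {t : Cell → ℕ // IsSSYT lam t ∧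
    ∀ i, Nat.card {c : Cell // c ∈ diag lam ∧ t c = i} = μ i} := by
    by_contra hn
    rw [not_nonempty_iff] at hn
    apply h
    rw [schurFn, Nat.card_of_isEmpty]; rfl
  obtain ⟨f, hf, hw⟩ := this
  obtain ⟨w, _, h⟩ := exists_wt (∑ v ∈ diagF (rowsF lam), f v) μ (by
    rw [← hw 0, Nat.card_eq_zero]
    left
    constructor
    rintro ⟨v, hv, hv'⟩
    have := hf.2.1 v hv
    omega) (by
    intro i hi
    rw [← hw i, Nat.card_eq_zero]
    left
    constructor
    rintro ⟨v, hv, hv'⟩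
    rw [mem_diag] at hv
    have := Finset.single_le_sum (f := f) (fun _ _ => Nat.zero_le _) hv
    omega)
  exact ⟨w, h⟩

end Tableaux
section Expansion

noncomputable def shft (ν : Shp) : Shp :=
  Finsupp.comapDomain Nat.succ ν (Nat.succ_injective.injOn)

theorem shft_apply (ν : Shp) (r : ℕ) : shft ν r = ν (r + 1) := rfl

theorem dg_shft (ν : Shp) : dg ν = dg (shft ν) + ν 0 := by
  obtain ⟨n, hn⟩ := Shp_bound ν
  rw [dg_range ν (n + 1) (fun r hr => hn r (by omega)), Finset.sum_range_succ',
    dg_range (shft ν) n (fun r hr => hn (r + 1) (by omega))]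
  rfl

theorem shft_anti {ν : Shp} (h : AntiT ν) : AntiT (shft ν) := fun r => h (r + 1)

theorem KT_big (ν : Shp) (a : ℕ) (w : List ℕ) (h : ν 0 < a) : KT (a :: w) ν = 0 := by
  rw [KT, KG]
  refine Finset.sum_eq_zero fun κ _ => ?_
  split_ifs with h1
  · rw [hT, if_neg, zero_mul]
    intro h2
    have h3 : shft ν ≤ κ := fun r => h2.2 r
    have h4 := dg_strict.monotone h3
    have := dg_shft ν
    omega
  · rfl

theorem KT_first (ν : Shp) (hν : AntiT ν) (w : List ℕ) : KT (ν 0 :: w) ν = KT w (shft ν) := by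
  have hs := dg_shft ν
  have hle : shft ν ≤ ν := fun r => hν r
  rw [KT, KG, Finset.sum_eq_single_of_mem (shft ν) (Finset.mem_Iic.2 hle)]
  · rw [if_pos hs, hT, if_pos ⟨hle, fun r => le_rfl⟩, one_mul, KT]
  · intro κ _ hne
    split_ifs with h1
    · rw [hT, if_neg, zero_mul]
      intro h2
      have h3 : shft ν ≤ κ := fun r => h2.2 r
      have h4 := dg_strict (lt_of_le_of_ne h3 hne.symm)
      omega
    · rfl

theorem KT_indep {ι : Type*} (n : ℕ) : ∀ (S : Finset ι) (f : ι → Shp) (c : ι → ℚ),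
    (∀ i ∈ S, AntiT (f i)) → (∀ i ∈ S, dg (f i) ≤ n) → Set.InjOn f S →
    (∀ w, ∑ i ∈ S, c i * KT w (f i) = 0) → ∀ i ∈ S, c i = 0 := by
  induction n using Nat.strong_induction_on with
  | _ n ih =>
    intro S f c hA hd hinj hz
    by_contra hcon
    push Not at hcon
    obtain ⟨i0, hi0, hc0⟩ := hcon
    obtain ⟨i, hi, hmax⟩ := Finset.exists_max_image (S.filter (fun i => c i ≠ 0)) (fun i => f i 0)
      ⟨i0, Finset.mem_filter.2 ⟨hi0, hc0⟩⟩
    rw [Finset.mem_filter] at hi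
    have hmax' : ∀ j ∈ S, c j ≠ 0 → f j 0 ≤ f i 0 :=
      fun j hj hcj => hmax j (Finset.mem_filter.2 ⟨hj, hcj⟩)
    rcases Nat.eq_zero_or_pos (f i 0) with h0 | h0
    · have hzero : ∀ j ∈ S, c j ≠ 0 → f j = 0 := by
        intro j hj hcj
        ext r
        have h1 := hmax' j hj hcj
        have h2 := (hA j hj).le (Nat.zero_le r)
        simp
        omega
      have h2 := hz []
      rw [Finset.sum_eq_single_of_mem i hi.1] at h2
      · rw [hzero i hi.1 hi.2, KT, KG, if_pos (by simp [dg]), mul_one] at h2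
        exact hi.2 h2
      · intro j hj hne
        by_cases hcj : c j = 0
        · rw [hcj, zero_mul]
        · exact absurd (hinj hj hi.1 ((hzero j hj hcj).trans (hzero i hi.1 hi.2).symm)) hne
    · have hdi := hd i hi.1
      have hsi := dg_shft (f i)
      refine hi.2 (ih (n - f i 0) (by omega) (S.filter (fun j => f j 0 = f i 0)) (fun j => shft (f j)) c
        ?_ ?_ ?_ ?_ i (Finset.mem_filter.2 ⟨hi.1, rfl⟩))
      · intro j hj
        exact shft_anti (hA j (Finset.mem_filter.1 hj).1)
      · intro j hj
        rw [Finset.mem_filter] at hj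
        have := hd j hj.1
        have := dg_shft (f j)
        omega
      · intro j hj k hk hjk
        rw [Finset.mem_coe, Finset.mem_filter] at hj hk
        apply hinj hj.1 hk.1
        ext r
        cases r with
        | zero => rw [hj.2, hk.2]
        | succ r => exact DFunLike.congr_fun hjk r
      · intro w
        rw [← hz (f i 0 :: w), Finset.sum_filter]
        refine Finset.sum_congr rfl fun j hj => ?_
        split_ifs with h1
        · rw [← h1, KT_first _ (hA j hj)]
        · by_cases hcj : c j = 0
          · rw [hcj, zero_mul]
          · rw [KT_big _ _ _ (lt_of_le_of_ne (hmax' j hj hcj) h1), mul_zero]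

theorem list_norm (N : ℕ) (w : List ℕ) (h : w.sum = N) :
    ∃ (ρ : Nat.Partition N) (z : ℕ), w.Perm (List.replicate z 0 ++ plist ρ) := by
  refine ⟨Nat.Partition.ofSums N (w : Multiset ℕ) (by simpa using h), (w : Multiset ℕ).count 0, ?_⟩
  rw [← Multiset.coe_eq_coe, ← Multiset.coe_add, plist_coe, Multiset.coe_replicate]
  rw [← Multiset.filter_eq', Nat.Partition.ofSums]
  exact (Multiset.filter_add_not (fun x => x = 0) (w : Multiset ℕ)).symm

theorem KT_norm (w w' : List ℕ) (z : ℕ) (h : w.Perm (List.replicate z 0 ++ w')) (ν : Shp)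
    (hν : AntiT ν) : KT w ν = KT w' ν := by
  rw [KT, KT, KG_perm dg hT (fun s ρ a b hh => by
    have := hT_swap s ρ a b hh
    convert this) h, KG_replicate dg hT AntiT dg_strict hT_self w' ν hν]

theorem KX_norm {V : Type*} [Fintype V] (G : SimpleGraph V) (w w' : List ℕ) (z : ℕ)
    (h : w.Perm (List.replicate z 0 ++ w')) :
    KG Finset.card (hX G) w Finset.univ = KG Finset.card (hX G) w' Finset.univ := by
  rw [KG_perm Finset.card (hX G) (fun s ρ a b hh => by
    have := hX_swap_le G s ρ a b hh
    convert this) h, KG_replicate Finset.card (hX G) (fun _ => True) card_strictMono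
      (fun s _ => hX_self G s) w' _ trivial]

theorem expansion {V : Type*} [Fintype V] (G : SimpleGraph V) (N : ℕ) (hN : Fintype.card V = N) :
    ∃ c : Nat.Partition N →₀ ℚ, ∀ μ, XCoeff G μ = c.sum fun ν a => a * schurFn ν μ := by
  let M : (Nat.Partition N → ℚ) →ₗ[ℚ] (Nat.Partition N → ℚ) :=
    { toFun := fun c ρ => ∑ ν, c ν * KT (plist ρ) (rowsF ν)
      map_add' := fun c d => by
        funext ρ
        simp only [Pi.add_apply, add_mul, Finset.sum_add_distrib]
      map_smul' := fun a c => by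
        funext ρ
        simp only [Pi.smul_apply, smul_eq_mul, mul_assoc, Finset.mul_sum, RingHom.id_apply] }
  have hM : ∀ c ρ, M c ρ = ∑ ν, c ν * KT (plist ρ) (rowsF ν) := fun c ρ => rfl
  have hinj : Function.Injective M := by
    rw [← LinearMap.ker_eq_bot, LinearMap.ker_eq_bot']
    intro c hc
    funext ν
    refine KT_indep N Finset.univ rowsF c (fun i _ => rowsF_anti i) (fun i _ => (dg_rowsF i).le)
      (rowsF_inj.injOn) ?_ ν (Finset.mem_univ _)
    intro w
    by_cases hw : w.sum = N
    · obtain ⟨ρ, z, hp⟩ := list_norm N w hw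
      have h1 := congrFun hc ρ
      rw [hM] at h1
      simp only [KT_norm w _ z hp _ (rowsF_anti _)]
      exact h1
    · refine Finset.sum_eq_zero fun i _ => ?_
      have : KT w (rowsF i) = 0 := by
        by_contra hne
        have := KG_sum dg hT w _ hne
        rw [dg_rowsF] at this
        exact hw this
      rw [this, mul_zero]
  obtain ⟨c, hc⟩ := LinearMap.injective_iff_surjective.1 hinj
    (fun ρ => KG Finset.card (hX G) (plist ρ) Finset.univ)
  refine ⟨Finsupp.equivFunOnFinite.symm c, fun μ => ?_⟩
  rw [Finsupp.sum_fintype _ _ (by simp)]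
  simp only [Finsupp.equivFunOnFinite_symm_apply_apply]
  by_cases hμ : ∃ w, μ = wt w
  · obtain ⟨w, rfl⟩ := hμ
    rw [XCoeff_eq]
    simp only [schurFn_eq]
    by_cases hw : w.sum = N
    · obtain ⟨ρ, z, hp⟩ := list_norm N w hw
      have h1 := congrFun hc ρ
      rw [hM] at h1
      simp only [KT_norm w _ z hp _ (rowsF_anti _)]
      rw [h1, KX_norm G w _ z hp]
    · have h1 : KG Finset.card (hX G) w Finset.univ = 0 := by
        by_contra hne
        have := KG_sum Finset.card (hX G) w _ hne
        rw [Finset.card_univ, hN] at this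
        exact hw this
      rw [h1]
      symm
      refine Finset.sum_eq_zero fun i _ => ?_
      have : KT w (rowsF i) = 0 := by
        by_contra hne
        have := KG_sum dg hT w _ hne
        rw [dg_rowsF] at this
        exact hw this
      rw [this, mul_zero]
  · have h1 : XCoeff G μ = 0 := by
      by_contra h; exact hμ (XCoeff_supp G μ h)
    have h2 : ∀ ν : Nat.Partition N, schurFn ν μ = 0 := by
      intro ν
      by_contra h; exact hμ (schurFn_supp ν μ h)
    simp [h1, h2]

theorem fCD_eq (C D : ℕ) : fCD C D = gf C D C := by
  have hex := expansion (genNet (C + D) C) (2 * C + D) (by simp; ring)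
  rw [fCD, sCoeff, dif_pos hex]
  have hc := hex.choose_spec
  generalize hex.choose = c at hc
  have h1 : (fun w => KG Finset.card (hX (genNet (C + D) C)) w Finset.univ) =
      fun w => ∑ ν : Nat.Partition (2 * C + D), c ν * KT w (rowsF ν) := by
    funext w
    have h2 := XCoeff_eq (genNet (C + D) C) w
    rw [hc (wt w), Finsupp.sum_fintype _ _ (by simp)] at h2
    simp only [schurFn_eq] at h2
    rw [h2]
    congr!
  rw [← Psi_net, h1, Psi_sum C D Finset.univ (fun ν => c ν) (fun ν w => KT w (rowsF ν))]
  rw [Finset.sum_eq_single_of_mem (twoOne C D) (Finset.mem_univ _)]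
  · rw [Psi_KT C D _ (rowsF_anti _) (dg_rowsF _), if_pos (rowsF_twoOne C D), mul_one]
  · intro ν _ hne
    rw [Psi_KT C D _ (rowsF_anti _) (dg_rowsF _), if_neg, mul_zero]
    intro h
    exact hne (rowsF_inj (h.trans (rowsF_twoOne C D).symm))

end Expansion

/-- For `C ≥ 1` and `D ≥ 1`:
`f(C,D) = C·f(C-1,D) + D·f(C,D-1)`. -/
theorem fCD_recurrence (C D : ℕ) (hC : 1 ≤ C) (hD : 1 ≤ D) :
    fCD C D = (C : ℚ) * fCD (C - 1) D + (D : ℚ) * fCD C (D - 1) := by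
  rw [fCD_eq, fCD_eq, fCD_eq]
  exact gf_rec C D hC hD
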